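/- arXiv:1911.08441 — 4 statements merged into one kernel-verified Lean document; each statement's English description precedes it below -/
import Mathlib

section
/- Let J̄ ⊆ P = K[y_1, …, y_n] be a monomial ideal and let J = Φ(J̄)S ⊆ S = K[x_1, …, x_n] be its extension under the K-algebra homomorphism Φ with Φ(y_i) = x_i^{ℓ_i}. Then for every h ≥ 0, dim_K Tor_h^P(P/J̄, P/(y_1, …, y_n)) = dim_K Tor_h^S(S/J, S/(x_1, …, x_n)); that is, the total Betti numbers of J̄ coincide with the total Betti numbers of the weighted ideal J = Φ(J̄)S. -/
open CategoryTheory MvPolynomial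

/-- The dimension over `K` of (the carrier of) a module `M` over a `K`-algebra `R`. -/
noncomputable def kdim (K R : Type) [Field K] [CommRing R] [Algebra K R]
    (M : ModuleCat R) : Cardinal :=
  @Module.rank K M _ _ (Module.compHom M (algebraMap K R))

/-- `dim_K Tor_h^T(T/N, T/𝔪_T)` for `T = K[x_1,…,x_n]` with irrelevant maximal ideal `𝔪_T`:
the `h`-th total Betti number of `T/N`. -/
noncomputable def totalBetti (K : Type) [Field K] (n : ℕ)
    (N : Ideal (MvPolynomial (Fin n) K)) (h : ℕ) : Cardinal :=
  kdim K (MvPolynomial (Fin n) K)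
    (((Tor (ModuleCat (MvPolynomial (Fin n) K)) h).obj
        (ModuleCat.of _ (MvPolynomial (Fin n) K ⧸ N))).obj
      (ModuleCat.of _ (MvPolynomial (Fin n) K ⧸
        Ideal.span (Set.range (X : Fin n → MvPolynomial (Fin n) K)))))

/-!
Division with remainder of exponents shows that `Φ` makes `S` a free `P`-module, with basis the
monomials whose exponents satisfy `r i < ℓ i`. Hence a projective resolution of `S/𝔪` over `S`
restricts to a projective resolution over `P`, and it resolves `P/𝔪` because `Φ` induces the
identity on residue fields. The projection formula `M ⊗_P N ≅ (S ⊗_P M) ⊗_S N` for `M = P/I`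
then identifies the complexes computing `Tor^P(P/I, P/𝔪)` and `Tor^S(S/IS, S/𝔪)`.
-/

open MonoidalCategory TensorProduct

section LeftDerived

universe v₁ v₂ v₃ u₁ u₂ u₃

variable {C : Type u₁} {D : Type u₂} {E : Type u₃} [Category.{v₁} C] [Category.{v₂} D]
  [Category.{v₃} E] [Abelian C] [Abelian D] [Abelian E] [EnoughProjectives C]

/-- The left derived functors of `F` at `G.obj X` are those of `G ⋙ F` at `X`, when `G` is exact
and preserves projectives. -/
noncomputable def leftDerivedPrecompIso [EnoughProjectives D] (G : C ⥤ D) (F : D ⥤ E)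
    [G.Additive] [F.Additive] [G.PreservesHomology] [G.PreservesProjectiveObjects] (n : ℕ) (X : C) :
    (F.leftDerived n).obj (G.obj X) ≅ ((G ⋙ F).leftDerived n).obj X :=
  let P := ProjectiveResolution.of X
  (G.mapProjectiveResolution P).isoLeftDerivedObj F n ≪≫ (P.isoLeftDerivedObj (G ⋙ F) n).symm

/-- The left derived functors of `F ⋙ H` are those of `F` followed by `H`, when `H` is exact. -/
noncomputable def leftDerivedPostcompIso (F : C ⥤ D) (H : D ⥤ E)
    [F.Additive] [H.Additive] [H.PreservesHomology] (n : ℕ) (X : C) :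
    ((F ⋙ H).leftDerived n).obj X ≅ H.obj ((F.leftDerived n).obj X) :=
  let P := ProjectiveResolution.of X
  P.isoLeftDerivedObj (F ⋙ H) n ≪≫
    (((F.mapHomologicalComplex _).obj P.complex).sc n).mapHomologyIso H ≪≫
    H.mapIso (P.isoLeftDerivedObj F n).symm

/-- Naturally isomorphic functors have naturally isomorphic left derived functors. -/
noncomputable def leftDerivedCongr {F G : C ⥤ D} [F.Additive] [G.Additive] (e : F ≅ G) (n : ℕ) :
    F.leftDerived n ≅ G.leftDerived n where
  hom := NatTrans.leftDerived e.hom n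
  inv := NatTrans.leftDerived e.inv n
  hom_inv_id := by rw [← NatTrans.leftDerived_comp, e.hom_inv_id, NatTrans.leftDerived_id]
  inv_hom_id := by rw [← NatTrans.leftDerived_comp, e.inv_hom_id, NatTrans.leftDerived_id]

end LeftDerived

section ChangeOfRings

universe u

theorem preservesProjectiveObjects_restrictScalars {R A : Type u} [Ring R] [Ring A] (f : R →+* A)
    [Projective ((ModuleCat.restrictScalars.{u} f).obj (ModuleCat.of A A))] :
    (ModuleCat.restrictScalars.{u} f).PreservesProjectiveObjects := by
  -- The right adjoint `Hom_R(A, -)` is exact because `A` is projective over `R`.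
  have : (ModuleCat.coextendScalars f).PreservesEpimorphisms := ⟨fun {M N} p _ => by
    rw [ModuleCat.epi_iff_surjective]
    intro φ
    let ψ : (ModuleCat.restrictScalars f).obj (ModuleCat.of A A) ⟶ N :=
      ModuleCat.ofHom (X := (ModuleCat.restrictScalars f).obj (ModuleCat.of A A))
        (ModuleCat.CoextendScalars.equiv f N φ)
    refine ⟨(Projective.factorThru ψ p).hom, ?_⟩
    exact congrArg ModuleCat.Hom.hom (Projective.factorThru_comp ψ p)⟩
  exact Functor.preservesProjectiveObjects_of_adjunction_of_preservesEpimorphisms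
    (ModuleCat.restrictCoextendScalarsAdj f)

variable {R A : Type u} [CommRing R] [CommRing A] (f : R →+* A)

/-- The projection formula `M ⊗[R] N ≅ (A ⊗[R] M) ⊗[A] N`, natural in the `A`-module `N`. -/
noncomputable def tensorRestrictScalarsIso (M : ModuleCat.{u} R) :
    ModuleCat.restrictScalars f ⋙ tensorLeft M ≅
      tensorLeft ((ModuleCat.extendScalars f).obj M) ⋙ ModuleCat.restrictScalars f :=
  NatIso.ofComponents (fun N =>
    letI := f.toAlgebra
    letI : Module R N := Module.compHom N f
    haveI : IsScalarTower R A N := .of_algebraMap_smul fun _ _ => rfl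
    LinearEquiv.toModuleIso
      (X₁ := (ModuleCat.restrictScalars f ⋙ tensorLeft M).obj N)
      (X₂ := (tensorLeft ((ModuleCat.extendScalars f).obj M) ⋙ ModuleCat.restrictScalars f).obj N)
      (TensorProduct.comm R M N ≪≫ₗ
        ((TensorProduct.AlgebraTensorModule.cancelBaseChange R A A N M).symm ≪≫ₗ
          TensorProduct.comm A N (A ⊗[R] M)).restrictScalars R))
    fun _ => ModuleCat.MonoidalCategory.tensor_ext fun _ _ => rfl

/-- The base change `A ⊗[R] (R ⧸ I)` is `A ⧸ I A`. -/
noncomputable def extendScalarsQuotientIso (I : Ideal R) :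
    (ModuleCat.extendScalars f).obj (ModuleCat.of R (R ⧸ I)) ≅
      ModuleCat.of A (A ⧸ I.map f) :=
  letI := f.toAlgebra
  (Algebra.TensorProduct.quotIdealMapEquivTensorQuot A I).toLinearEquiv.symm.toModuleIso

/-- The first isomorphism theorem for `R → A ⧸ J`, as an isomorphism of `R`-modules. -/
noncomputable def quotientIsoRestrictScalars {I : Ideal R} {J : Ideal A}
    (hI : RingHom.ker ((Ideal.Quotient.mk J).comp f) = I)
    (hf : Function.Surjective ((Ideal.Quotient.mk J).comp f)) :
    ModuleCat.of R (R ⧸ I) ≅ (ModuleCat.restrictScalars f).obj (ModuleCat.of A (A ⧸ J)) :=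
  letI := f.toAlgebra
  LinearEquiv.toModuleIso (X₂ := (ModuleCat.restrictScalars f).obj (ModuleCat.of A (A ⧸ J)))
    ((Submodule.quotEquivOfEq I _ hI.symm).trans
      ((Algebra.linearMap R (A ⧸ J)).quotKerEquivOfSurjective hf))

/-- Change of rings for `Tor` along `f : R →+* A` making `A` a projective `R`-module:
`Tor^R(M, N) ≅ Tor^A(A ⊗[R] M, N)` for every `A`-module `N`. -/
noncomputable def torRestrictScalarsIso
    [Projective ((ModuleCat.restrictScalars f).obj (ModuleCat.of A A))]
    (M : ModuleCat.{u} R) (N : ModuleCat.{u} A) (h : ℕ) :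
    ((Tor (ModuleCat R) h).obj M).obj ((ModuleCat.restrictScalars f).obj N) ≅
      (ModuleCat.restrictScalars f).obj
        (((Tor (ModuleCat A) h).obj ((ModuleCat.extendScalars f).obj M)).obj N) :=
  have := preservesProjectiveObjects_restrictScalars f
  leftDerivedPrecompIso (ModuleCat.restrictScalars f) (tensorLeft M) h N ≪≫
    (leftDerivedCongr (tensorRestrictScalarsIso f M) h).app N ≪≫
    leftDerivedPostcompIso _ (ModuleCat.restrictScalars f) h N

end ChangeOfRings

section Betti

variable {K R A : Type} [Field K] [CommRing R] [CommRing A] [Algebra K R] [Algebra K A]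

theorem kdim_eq_of_iso {M N : ModuleCat R} (e : M ≅ N) : kdim K R M = kdim K R N := by
  let : Module K M := Module.compHom M (algebraMap K R)
  let : Module K N := Module.compHom N (algebraMap K R)
  exact LinearEquiv.rank_eq
    { e.toLinearEquiv with map_smul' := fun k => e.toLinearEquiv.map_smul (algebraMap K R k) }

theorem kdim_restrictScalars (f : R →ₐ[K] A) (N : ModuleCat A) :
    kdim K R ((ModuleCat.restrictScalars (f : R →+* A)).obj N) = kdim K A N := by
  have h : Module.compHom ((ModuleCat.restrictScalars (f : R →+* A)).obj N) (algebraMap K R) =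
      Module.compHom N (algebraMap K A) := by
    ext k x
    exact congrArg (· • (x : N)) (f.commutes k)
  exact congrArg (fun inst => @Module.rank K N _ _ inst) h

theorem kdim_tor_extendScalars (f : R →ₐ[K] A)
    [Projective ((ModuleCat.restrictScalars (f : R →+* A)).obj (ModuleCat.of A A))]
    (M : ModuleCat R) (N : ModuleCat A) (h : ℕ) :
    kdim K A (((Tor (ModuleCat A) h).obj ((ModuleCat.extendScalars (f : R →+* A)).obj M)).obj N) =
      kdim K R (((Tor (ModuleCat R) h).obj M).obj
        ((ModuleCat.restrictScalars (f : R →+* A)).obj N)) := by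
  rw [← kdim_restrictScalars f]
  exact kdim_eq_of_iso (torRestrictScalarsIso (f : R →+* A) M N h).symm

end Betti

section FreeExtension

universe u

-- A partial converse to `Module.Basis.smulTower`.
theorem free_of_basis_smul {K P M ι α : Type*} [Semiring K] [Semiring P]
    [AddCommMonoid M] [Module K P] [Module K M] [Module P M] [IsScalarTower K P M]
    (b : Module.Basis α K P) (c : ι → M) (B : Module.Basis (ι × α) K M)
    (hB : ∀ i a, B (i, a) = b a • c i) : Module.Free P M := by
  let e : (ι →₀ P) ≃ₗ[K] M :=
    (Finsupp.basis fun _ : ι => b).equiv B (Equiv.sigmaEquivProd ι α)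
  have he : (Finsupp.linearCombination P c).restrictScalars K = e.toLinearMap :=
    (Finsupp.basis fun _ : ι => b).ext fun ⟨i, a⟩ => by
      rw [LinearEquiv.coe_coe, Module.Basis.equiv_apply]
      simp [hB, Finsupp.coe_basis]
  have hc : Function.Bijective (Finsupp.linearCombination P c) := by
    convert e.bijective using 1
    exact congrArg DFunLike.coe he
  exact Module.Free.of_equiv (LinearEquiv.ofBijective _ hc)

theorem projective_restrictScalars_of_basis_mul {K ι α : Type*} {P A : Type u} [CommRing K]
    [CommRing P] [CommRing A] [Algebra K P] [Algebra K A] (f : P →ₐ[K] A) (b : Module.Basis α K P)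
    (c : ι → A) (B : Module.Basis (ι × α) K A) (hB : ∀ i a, B (i, a) = f (b a) * c i) :
    Projective ((ModuleCat.restrictScalars (f : P →+* A)).obj (ModuleCat.of A A)) := by
  algebraize [(f : P →+* A)]
  have : IsScalarTower K P A := .of_algHom f
  have : Module.Free P A := free_of_basis_smul b c B hB
  exact (IsProjective.iff_projective A).mp Module.Projective.of_free

end FreeExtension

section PowerSubstitution

variable {σ K : Type*}

/-- Division with remainder of exponent vectors, `d = r + ℓ q` with `0 ≤ r < ℓ` in each
coordinate, as the bijection `d ↦ (r, q)`. -/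
noncomputable def exponentDivMod (ℓ : σ → ℕ) (hℓ : ∀ i, 0 < ℓ i) :
    (σ →₀ ℕ) ≃ {r : σ →₀ ℕ // ∀ i, r i < ℓ i} × (σ →₀ ℕ) where
  toFun d :=
    (⟨.onFinset d.support (fun i => d i % ℓ i)
        fun _ hi => Finsupp.mem_support_iff.mpr fun h => hi (by rw [h, Nat.zero_mod]),
      fun i => Nat.mod_lt _ (hℓ i)⟩,
    .onFinset d.support (fun i => d i / ℓ i)
      fun _ hi => Finsupp.mem_support_iff.mpr fun h => hi (by rw [h, Nat.zero_div]))
  invFun p := p.1.1 + ℓ • p.2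
  left_inv d := by
    ext i
    exact Nat.mod_add_div (d i) (ℓ i)
  right_inv := by
    rintro ⟨⟨r, hr⟩, q⟩
    ext i
    · simp [Nat.mod_eq_of_lt (hr i)]
    · simp [Nat.add_mul_div_left _ _ (hℓ i), Nat.div_eq_of_lt (hr i)]

/-- The substitution `X i ↦ X i ^ ℓ i`, the homomorphism `Φ` of the theorem. -/
noncomputable def powSubst (K : Type*) [CommSemiring K] (ℓ : σ → ℕ) :
    MvPolynomial σ K →ₐ[K] MvPolynomial σ K :=
  aeval fun i => X i ^ ℓ i

theorem powSubst_monomial [CommSemiring K] (ℓ : σ → ℕ) (d : σ →₀ ℕ) (a : K) :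
    powSubst K ℓ (monomial d a) = monomial (ℓ • d) a := by
  rw [powSubst, aeval_monomial, monomial_eq, Finsupp.prod,
    Finsupp.prod_of_support_subset (s := d.support)]
  · simp [pow_mul]
  · intro i; simp
  · simp

theorem projective_restrictScalars_powSubst [CommRing K] (ℓ : σ → ℕ) (hℓ : ∀ i, 0 < ℓ i) :
    Projective
      ((ModuleCat.restrictScalars (powSubst K ℓ : MvPolynomial σ K →+* MvPolynomial σ K)).obj
        (ModuleCat.of _ (MvPolynomial σ K))) := by
  refine projective_restrictScalars_of_basis_mul (powSubst K ℓ) (basisMonomials σ K)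
    (fun r : {r : σ →₀ ℕ // ∀ i, r i < ℓ i} => monomial r.1 (1 : K))
    ((basisMonomials σ K).reindex (exponentDivMod ℓ hℓ)) fun r q => ?_
  rw [Module.Basis.reindex_apply, coe_basisMonomials, powSubst_monomial, monomial_mul, mul_one,
    add_comm]
  rfl

theorem mk_comp_powSubst [CommRing K] (ℓ : σ → ℕ) (hℓ : ∀ i, 0 < ℓ i) :
    (Ideal.Quotient.mk (Ideal.span (Set.range (X : σ → MvPolynomial σ K)))).comp (powSubst K ℓ) =
      Ideal.Quotient.mk _ := by
  have mk_X (i : σ) :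
      Ideal.Quotient.mk (Ideal.span (Set.range (X : σ → MvPolynomial σ K))) (X i) = 0 :=
    Ideal.Quotient.eq_zero_iff_mem.mpr (Ideal.subset_span ⟨i, rfl⟩)
  refine ringHom_ext (fun a => ?_) fun i => ?_
  · simp [powSubst]
  · simp [powSubst, mk_X, (hℓ i).ne']

/-- The residue field at the origin is its own restriction of scalars along `powSubst K ℓ`. -/
noncomputable def residueFieldIsoRestrictScalars [CommRing K] (ℓ : σ → ℕ) (hℓ : ∀ i, 0 < ℓ i) :
    ModuleCat.of _ (MvPolynomial σ K ⧸ Ideal.span (Set.range (X : σ → MvPolynomial σ K))) ≅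
      (ModuleCat.restrictScalars (powSubst K ℓ : MvPolynomial σ K →+* MvPolynomial σ K)).obj
        (ModuleCat.of _
          (MvPolynomial σ K ⧸ Ideal.span (Set.range (X : σ → MvPolynomial σ K)))) :=
  quotientIsoRestrictScalars (powSubst K ℓ : MvPolynomial σ K →+* MvPolynomial σ K)
    (by rw [mk_comp_powSubst ℓ hℓ, Ideal.mk_ker])
    (by rw [mk_comp_powSubst ℓ hℓ]; exact Ideal.Quotient.mk_surjective)

end PowerSubstitution

theorem totalBetti_weighted_ideal_eq_general (K : Type) [Field K] (n : ℕ)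
    (ℓ : Fin n → ℕ) (hℓ : ∀ i, 0 < ℓ i) (I : Ideal (MvPolynomial (Fin n) K)) (h : ℕ) :
    totalBetti K n (I.map (powSubst K ℓ)) h = totalBetti K n I h := by
  let S := MvPolynomial (Fin n) K
  let Φ : S →ₐ[K] S := powSubst K ℓ
  let k := ModuleCat.of S (S ⧸ Ideal.span (Set.range (X : Fin n → S)))
  have : Projective ((ModuleCat.restrictScalars (Φ : S →+* S)).obj (ModuleCat.of S S)) :=
    projective_restrictScalars_powSubst ℓ hℓ
  calc totalBetti K n (I.map Φ) h
      = kdim K S (((Tor (ModuleCat S) h).obj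
          ((ModuleCat.extendScalars (Φ : S →+* S)).obj (ModuleCat.of S (S ⧸ I)))).obj k) :=
        kdim_eq_of_iso (((Tor _ h).mapIso (extendScalarsQuotientIso (Φ : S →+* S) I)).symm.app k)
    _ = kdim K S (((Tor (ModuleCat S) h).obj (ModuleCat.of S (S ⧸ I))).obj
          ((ModuleCat.restrictScalars (Φ : S →+* S)).obj k)) :=
        kdim_tor_extendScalars Φ _ k h
    _ = totalBetti K n I h :=
        kdim_eq_of_iso (((Tor _ h).obj _).mapIso (residueFieldIsoRestrictScalars ℓ hℓ).symm)

/-- For a monomial ideal `J̄ ⊆ P = K[y_1,…,y_n]` and its extension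
`J = Φ(J̄)S ⊆ S = K[x_1,…,x_n]` under the `K`-algebra map `Φ(y_i) = x_i^{ℓ_i}`, the total
Betti numbers of `J̄` and of the weighted ideal `J` coincide:
`dim_K Tor_h^P(P/J̄, P/𝔪) = dim_K Tor_h^S(S/J, S/𝔪)` for all `h`. -/
theorem totalBetti_weighted_ideal_eq
    (K : Type) [Field K] [Infinite K] (n : ℕ) (hn : 2 ≤ n)
    (ℓ : Fin n → ℕ) (hℓ : ∀ i, 0 < ℓ i)
    (Jbar : Ideal (MvPolynomial (Fin n) K))
    (hmono : ∃ A : Set (Fin n →₀ ℕ),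
      Jbar = Ideal.span ((fun d => (monomial d (1 : K) : MvPolynomial (Fin n) K)) '' A))
    (J : Ideal (MvPolynomial (Fin n) K))
    (hJ : J = Ideal.map
      (aeval (fun i : Fin n => (X i : MvPolynomial (Fin n) K) ^ ℓ i) :
        MvPolynomial (Fin n) K →ₐ[K] MvPolynomial (Fin n) K) Jbar) :
    ∀ h : ℕ, totalBetti K n J h = totalBetti K n Jbar h := by
  subst hJ
  exact totalBetti_weighted_ideal_eq_general K n ℓ hℓ Jbar
end

section
/- Let J̄ ⊆ P = K[y_1, …, y_n] be a monomial ideal and let J = Φ(J̄)S ⊆ S = K[x_1, …, x_n] be its extension under the K-algebra homomorphism Φ with Φ(y_i) = x_i^{ℓ_i}. Then the localization of S/J at the maximal ideal generated by the images of x_1, …, x_n is a Cohen–Macaulay local ring if and only if the localization of P/J̄ at the maximal ideal generated by the images of y_1, …, y_n is a Cohen–Macaulay local ring. -/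
open MvPolynomial

/-- The depth of a Noetherian local ring: the supremum of the lengths of regular sequences
consisting of elements of the maximal ideal. -/
noncomputable def localDepth (T : Type) [CommRing T] [IsLocalRing T] : ℕ∞ :=
  ⨆ rs : {l : List T // RingTheory.Sequence.IsRegular T l ∧
      ∀ r ∈ l, r ∈ IsLocalRing.maximalIdeal T}, (rs.1.length : ℕ∞)

/-- A local ring is Cohen–Macaulay if its depth equals its Krull dimension. -/
def IsCohenMacaulayLocal (T : Type) [CommRing T] [IsLocalRing T] : Prop :=
  (localDepth T : WithBot ℕ∞) = ringKrullDim T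

/-!
The map `Φ` makes `S` a free, hence flat, `P`-module: by division with remainder in each exponent,
every monomial of `S` is uniquely `Φ(m) * x ^ r` with `m` a monomial of `P` and `r i < ℓ i`.
Flatness passes to `P/J̄ → S/J` and to the localizations, and since `x_i ^ ℓ_i = Φ(y_i)` the closed
fibre of the resulting local homomorphism `A → B` is zero-dimensional. Along such a homomorphism
the dimension is unchanged by the dimension formula for flat local homomorphisms. The depth is
unchanged because a finite `A`-module `M` admits a regular element in the maximal ideal as soon as
`B ⊗ M` does: otherwise some nonzero `u : M` is killed by the maximal ideal of `A`, and then
`1 ⊗ u ≠ 0` is killed by a power of every element of the maximal ideal of `B`.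
-/

open IsLocalRing RingTheory.Sequence TensorProduct

section RegularSequences

universe u v

open scoped Pointwise in
lemma smul_top_quotSMulTop_ne_top {R M : Type*} [CommRing R] [AddCommGroup M] [Module R M]
    {I : Ideal R} (hI : I • (⊤ : Submodule R M) ≠ ⊤) {x : R} (hx : x ∈ I) :
    I • (⊤ : Submodule R (QuotSMulTop x M)) ≠ ⊤ := by
  have smul_top_le : x • (⊤ : Submodule R M) ≤ I • ⊤ := by
    rw [← Submodule.ideal_span_singleton_smul]
    exact Submodule.smul_mono_left ((Ideal.span_singleton_le_iff_mem I).mpr hx)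
  contrapose! hI
  rwa [← Submodule.range_mkQ, ← Submodule.map_top, ← Submodule.map_smul'', Submodule.map_top,
    Submodule.range_mkQ, Submodule.map_mkQ_eq_top, sup_of_le_right smul_top_le] at hI

open CategoryTheory Abelian in
/-- By Rees' theorem the lengths of regular sequences are detected by the vanishing of
`Ext (R ⧸ I) M i`, and the long exact sequence for multiplication by `x` shifts it by one degree. -/
lemma exists_isRegular_quotSMulTop {R : Type u} {M : Type v} [CommRing R] [IsNoetherianRing R]
    [Small.{v} R] [AddCommGroup M] [Module R M] [Module.Finite R M] {I : Ideal R}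
    (hI : I • (⊤ : Submodule R M) ≠ ⊤) {x : R} (hx : x ∈ I) (reg : IsSMulRegular M x) {n : ℕ}
    (h : ∃ rs : List R, rs.length = n + 1 ∧ (∀ r ∈ rs, r ∈ I) ∧ IsRegular M rs) :
    ∃ rs : List R, rs.length = n ∧ (∀ r ∈ rs, r ∈ I) ∧ IsRegular (QuotSMulTop x M) rs := by
  have ext_vanishing := ((ModuleCat.exists_isRegular_tfae I (n + 1) (ModuleCat.of R M)
    hI.lt_top).out 1 3).mpr h
  refine ((ModuleCat.exists_isRegular_tfae I n (ModuleCat.of R (QuotSMulTop x M))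
    (smul_top_quotSMulTop_ne_top hI hx).lt_top).out 1 3).mp fun i hi ↦ ?_
  have zero_left := AddCommGrpCat.isZero_of_iff_subsingleton.mpr (ext_vanishing i (by lia))
  have zero_right := AddCommGrpCat.isZero_of_iff_subsingleton.mpr (ext_vanishing (i + 1) (by lia))
  exact AddCommGrpCat.subsingleton_of_isZero <| ShortComplex.Exact.isZero_of_both_zeros
    ((Ext.covariant_sequence_exact₃' _
      (IsSMulRegular.smulShortComplex_shortExact (M := ModuleCat.of R M) reg)) i (i + 1) rfl)
    (zero_left.eq_zero_of_src _) (zero_right.eq_zero_of_tgt _)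

end RegularSequences

section FaithfullyFlat

variable {A B : Type*} [CommRing A] [CommRing B] [IsNoetherianRing A] [Algebra A B]
  [Module.FaithfullyFlat A B]

lemma exists_isSMulRegular_of_tensorProduct {I : Ideal A} (M : Type*) [AddCommGroup M]
    [Module A M] [Module.Finite A M] {y : B} (hy : y ∈ (I.map (algebraMap A B)).radical)
    (reg : IsSMulRegular (B ⊗[A] M) y) : ∃ x ∈ I, IsSMulRegular M x := by
  suffices Subsingleton ((A ⧸ I) →ₗ[A] M) by
    simpa [Ideal.annihilator_quotient] using IsSMulRegular.subsingleton_linearMap_iff.mp this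
  refine subsingleton_of_forall_eq 0 fun g ↦ ?_
  have smul_eq_zero (a : A) (ha : a ∈ I) : a • g 1 = 0 := by
    rw [← map_smul, Algebra.smul_def, mul_one, Ideal.Quotient.algebraMap_eq,
      Ideal.Quotient.eq_zero_iff_mem.mpr ha, map_zero]
  have map_le_annihilator : I.map (algebraMap A B) ≤
      (Submodule.span B {(1 : B) ⊗ₜ[A] g 1}).annihilator := by
    refine Ideal.map_le_iff_le_comap.mpr fun a ha ↦ ?_
    rw [Ideal.mem_comap, Submodule.mem_annihilator_span_singleton, algebraMap_smul,
      ← TensorProduct.tmul_smul, smul_eq_zero a ha, TensorProduct.tmul_zero]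
  have apply_one : g 1 = 0 := by
    obtain ⟨k, hk⟩ := hy
    have hk := (Submodule.mem_annihilator_span_singleton _ _).mp (map_le_annihilator hk)
    exact (Module.FaithfullyFlat.one_tmul_eq_zero_iff A M (A := B) _).mp
      (reg.pow k (by simpa using hk))
  exact Submodule.linearMap_qext _ (LinearMap.ext_ring (by simpa using apply_one))

variable [IsLocalRing A] [IsLocalRing B] [IsNoetherianRing B]

lemma exists_isRegular_of_tensorProduct
    (hrad : maximalIdeal B ≤ ((maximalIdeal A).map (algebraMap A B)).radical) {n : ℕ}
    (M : Type*) [AddCommGroup M] [Module A M] [Module.Finite A M]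
    (h : ∃ rs : List B, rs.length = n ∧ (∀ r ∈ rs, r ∈ maximalIdeal B) ∧
      IsRegular (B ⊗[A] M) rs) :
    ∃ rs : List A, rs.length = n ∧ (∀ r ∈ rs, r ∈ maximalIdeal A) ∧ IsRegular M rs := by
  have : Nontrivial (B ⊗[A] M) := h.choose_spec.2.2.nontrivial
  induction n generalizing M with
  | zero =>
    have : Nontrivial M := not_subsingleton_iff_nontrivial.mp fun _ ↦
      not_subsingleton (B ⊗[A] M) inferInstance
    exact ⟨[], rfl, by simp, IsRegular.nil _ _⟩
  | succ n ih =>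
    obtain ⟨x, hx, hxM⟩ : ∃ x ∈ maximalIdeal A, IsSMulRegular M x := by
      obtain ⟨_ | ⟨y, rs⟩, hlen, hmem, hreg⟩ := h
      · simp at hlen
      · exact exists_isSMulRegular_of_tensorProduct M (hrad (hmem y List.mem_cons_self))
          ((isRegular_cons_iff _ _ _).mp hreg).1
    have nakayama : maximalIdeal B • (⊤ : Submodule B (B ⊗[A] M)) ≠ ⊤ :=
      (Submodule.top_ne_ideal_smul_of_le_jacobson_annihilator
        (maximalIdeal_le_jacobson _)).symm
    have hxN : IsSMulRegular (B ⊗[A] M) (algebraMap A B x) := by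
      rw [isSMulRegular_algebraMap_iff]
      exact hxM.lTensor B
    obtain ⟨rs, hlen, hmem, hreg⟩ := exists_isRegular_quotSMulTop nakayama
      ((map_mem_nonunits_iff (algebraMap A B) x).mpr hx) hxN h
    have hreg := (LinearEquiv.isRegular_congr
      (QuotSMulTop.algebraMapTensorEquivTensorQuotSMulTop x M B) rs).mp hreg
    obtain ⟨rs', hlen', hmem', hreg'⟩ :=
      ih (QuotSMulTop x M) ⟨rs, hlen, hmem, hreg⟩ hreg.nontrivial
    exact ⟨x :: rs', by simp [hlen'], by simpa using ⟨hx, hmem'⟩, hreg'.cons hxM⟩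

lemma ringKrullDim_eq_of_maximalIdeal_le_radical_map
    (hrad : maximalIdeal B ≤ ((maximalIdeal A).map (algebraMap A B)).radical) :
    ringKrullDim B = ringKrullDim A := by
  set I := (maximalIdeal A).map (algebraMap A B)
  have hI : I ≤ maximalIdeal B := Ideal.map_le_iff_le_comap.mpr
    (maximalIdeal_comap (algebraMap A B)).ge
  have : (maximalIdeal B).LiesOver (maximalIdeal A) :=
    ⟨(maximalIdeal_comap (algebraMap A B)).symm⟩
  have height_fibre : ((maximalIdeal B).map (Ideal.Quotient.mk I)).height = 0 := by
    have hp : ((maximalIdeal B).map (Ideal.Quotient.mk I)).IsPrime :=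
      Ideal.map_isPrime_of_surjective Ideal.Quotient.mk_surjective (by simpa using hI)
    rw [Ideal.height_eq_zero_iff]
    refine ⟨⟨hp, bot_le⟩, fun q ⟨hq, _⟩ _ ↦ Ideal.map_le_iff_le_comap.mpr (hrad.trans ?_)⟩
    rw [(hq.comap (Ideal.Quotient.mk I)).radical_le_iff]
    exact Ideal.le_comap_of_map_le (by simp)
  rw [← maximalIdeal_height_eq_ringKrullDim, ← maximalIdeal_height_eq_ringKrullDim,
    Ideal.height_eq_height_add_of_liesOver_of_hasGoingDown (maximalIdeal A) (maximalIdeal B),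
    height_fibre, add_zero]

end FaithfullyFlat

section CohenMacaulay

variable {A B : Type} [CommRing A] [CommRing B] [IsLocalRing A] [IsLocalRing B]
  [IsNoetherianRing A] [IsNoetherianRing B] [Algebra A B] [Module.FaithfullyFlat A B]

lemma localDepth_eq_of_maximalIdeal_le_radical_map
    (hrad : maximalIdeal B ≤ ((maximalIdeal A).map (algebraMap A B)).radical) :
    localDepth B = localDepth A := by
  refine le_antisymm (iSup_le fun ⟨rs, hreg, hmem⟩ ↦ ?_) (iSup_le fun ⟨rs, hreg, hmem⟩ ↦ ?_)
  · obtain ⟨rs', hlen', hmem', hreg'⟩ := exists_isRegular_of_tensorProduct hrad A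
      ⟨rs, rfl, hmem, (LinearEquiv.isRegular_congr (AlgebraTensorModule.rid A B B) rs).mpr hreg⟩
    exact le_iSup_of_le ⟨rs', hreg', hmem'⟩ (by simp [hlen'])
  · refine le_iSup_of_le ⟨rs.map (algebraMap A B), hreg.of_faithfullyFlat, ?_⟩ (by simp)
    exact List.forall_mem_map.mpr fun a ha ↦
      (map_mem_nonunits_iff (algebraMap A B) a).mpr (hmem a ha)

lemma isCohenMacaulayLocal_iff_of_maximalIdeal_le_radical_map
    (hrad : maximalIdeal B ≤ ((maximalIdeal A).map (algebraMap A B)).radical) :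
    IsCohenMacaulayLocal B ↔ IsCohenMacaulayLocal A := by
  rw [IsCohenMacaulayLocal, IsCohenMacaulayLocal, localDepth_eq_of_maximalIdeal_le_radical_map hrad,
    ringKrullDim_eq_of_maximalIdeal_le_radical_map hrad]

end CohenMacaulay

section Flat

lemma flat_quotientMap {R S : Type*} [CommRing R] [CommRing S] {f : R →+* S} (hf : f.Flat)
    (I : Ideal R) : (Ideal.quotientMap (I.map f) f Ideal.le_comap_map).Flat := by
  algebraize [f]
  have : Module.Flat (R ⧸ I) (S ⧸ I.map (algebraMap R S)) := Module.Flat.of_linearEquiv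
    (Algebra.TensorProduct.quotIdealMapEquivQuotTensor S I).toLinearEquiv
  exact RingHom.flat_algebraMap_iff.mpr this

lemma isCohenMacaulayLocal_localization_iff_of_flat {R S : Type} [CommRing R] [CommRing S]
    [IsNoetherianRing R] [IsNoetherianRing S] {f : R →+* S} (hf : f.Flat) {q : Ideal R}
    {p : Ideal S} [q.IsPrime] [p.IsPrime] (hqp : q = p.comap f) (hrad : p ≤ (q.map f).radical) :
    IsCohenMacaulayLocal (Localization.AtPrime p) ↔
      IsCohenMacaulayLocal (Localization.AtPrime q) := by
  let g := Localization.localRingHom q p f hqp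
  have g_local : IsLocalHom g := Localization.isLocalHom_localRingHom q p f hqp
  have g_flat : g.Flat := hf.localRingHom p q hqp
  algebraize [Localization.localRingHom q p f hqp]
  have : IsLocalHom (algebraMap (Localization.AtPrime q) (Localization.AtPrime p)) := g_local
  have := Module.FaithfullyFlat.of_flat_of_isLocalHom (A := Localization.AtPrime q)
    (B := Localization.AtPrime p)
  refine isCohenMacaulayLocal_iff_of_maximalIdeal_le_radical_map ?_
  have g_comp : g.comp (algebraMap R (Localization.AtPrime q)) =
      (algebraMap S (Localization.AtPrime p)).comp f :=
    RingHom.ext (Localization.localRingHom_to_map q p f hqp)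
  calc maximalIdeal (Localization.AtPrime p)
      = p.map (algebraMap S _) := (Localization.AtPrime.map_eq_maximalIdeal ..).symm
    _ ≤ ((q.map f).map (algebraMap S _)).radical :=
        (Ideal.map_mono hrad).trans (Ideal.map_radical_le _)
    _ = ((maximalIdeal (Localization.AtPrime q)).map g).radical := by
        rw [← Localization.AtPrime.map_eq_maximalIdeal, Ideal.map_map, Ideal.map_map, g_comp]

lemma isCohenMacaulayLocal_localization_quotient_iff_of_flat {R S : Type} [CommRing R]
    [CommRing S] [IsNoetherianRing R] [IsNoetherianRing S] {f : R →+* S} (hf : f.Flat)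
    {I m : Ideal R} {J n : Ideal S} (hJ : J = I.map f) [(m.map (Ideal.Quotient.mk I)).IsPrime]
    [(n.map (Ideal.Quotient.mk J)).IsPrime] (hcomap : (I.map f ⊔ n).comap f = I ⊔ m)
    (hrad : n ≤ (m.map f).radical) :
    IsCohenMacaulayLocal (Localization.AtPrime (n.map (Ideal.Quotient.mk J))) ↔
      IsCohenMacaulayLocal (Localization.AtPrime (m.map (Ideal.Quotient.mk I))) := by
  subst hJ
  refine isCohenMacaulayLocal_localization_iff_of_flat (flat_quotientMap hf I) ?_ ?_
  · apply Ideal.comap_injective_of_surjective _ (Ideal.Quotient.mk_surjective (I := I))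
    rw [Ideal.comap_comap, Ideal.quotientMap_comp_mk, ← Ideal.comap_comap,
      Ideal.comap_map_quotientMk, Ideal.comap_map_quotientMk, hcomap]
  · rw [Ideal.map_map, Ideal.quotientMap_comp_mk, ← Ideal.map_map]
    exact (Ideal.map_mono hrad).trans (Ideal.map_radical_le _)

/-- The family `s` is then a basis of `S` over `R`. -/
lemma flat_of_basis_mul {K R S ι κ τ : Type*} [CommRing K] [CommRing R] [CommRing S] [Algebra K R]
    [Algebra K S] (φ : R →ₐ[K] S) (b : Module.Basis ι K R) (c : Module.Basis κ K S) (s : τ → S)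
    (e : τ × ι ≃ κ) (h : ∀ t i, φ (b i) * s t = c (e (t, i))) : φ.toRingHom.Flat := by
  algebraize [φ.toRingHom]
  have : IsScalarTower K R S := .of_algebraMap_eq fun x ↦ (φ.commutes x).symm
  let T : (τ →₀ R) →ₗ[R] S := Finsupp.linearCombination R s
  let E : (τ →₀ R) ≃ₗ[K] S :=
    (Finsupp.basis fun _ : τ ↦ b).equiv c ((Equiv.sigmaEquivProd τ ι).trans e)
  have restrictScalars_T : T.restrictScalars K = E.toLinearMap := by
    refine (Finsupp.basis fun _ : τ ↦ b).ext fun ⟨t, i⟩ ↦ ?_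
    simp only [E, T, LinearEquiv.coe_coe, Module.Basis.equiv_apply, Equiv.trans_apply,
      Equiv.sigmaEquivProd_apply, ← h]
    simp [Algebra.smul_def, RingHom.algebraMap_toAlgebra]
  have T_bijective : Function.Bijective T := by
    rw [show ⇑T = ⇑E from congrArg DFunLike.coe restrictScalars_T]
    exact E.bijective
  exact Module.Flat.of_linearEquiv (LinearEquiv.ofBijective T T_bijective).symm

end Flat

section ExpandVars

variable {σ K : Type*} [CommRing K] (ℓ : σ → ℕ)

/-- The `K`-algebra homomorphism `Φ` raising the `i`-th variable to the power `ℓ i`. It is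
`MvPolynomial.expand` with an exponent depending on the variable. -/
noncomputable def expandVars : MvPolynomial σ K →ₐ[K] MvPolynomial σ K :=
  aeval fun i ↦ X i ^ ℓ i

lemma expandVars_monomial (d : σ →₀ ℕ) :
    expandVars ℓ (monomial d (1 : K)) = monomial (ℓ • d) 1 := by
  have support_subset : (ℓ • d).support ⊆ d.support := fun i ↦ by simp +contextual
  rw [expandVars, aeval_monomial, map_one, one_mul, monomial_eq, map_one, one_mul,
    Finsupp.prod_of_support_subset _ support_subset _ (by simp)]
  exact Finset.prod_congr rfl fun i _ ↦ by simp [pow_mul]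

variable {ℓ}

/-- Componentwise division with remainder by `ℓ` on exponent vectors: every `e` is uniquely
`ℓ • d + r` with `r i < ℓ i` for all `i`. -/
noncomputable def exponentDivModEquiv (hℓ : ∀ i, 0 < ℓ i) :
    {r : σ →₀ ℕ // ∀ i, r i < ℓ i} × (σ →₀ ℕ) ≃ (σ →₀ ℕ) where
  toFun p := ℓ • p.2 + p.1
  invFun e :=
    (⟨.onFinset e.support (fun i ↦ e i % ℓ i) fun i ↦ by contrapose!; simp +contextual,
      fun i ↦ Nat.mod_lt _ (hℓ i)⟩,
    .onFinset e.support (fun i ↦ e i / ℓ i) fun i ↦ by contrapose!; simp +contextual)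
  left_inv := by
    rintro ⟨⟨r, hr⟩, d⟩
    ext i
    · simp [Nat.mod_eq_of_lt (hr i)]
    · simp [Nat.mul_add_div (hℓ i), Nat.div_eq_of_lt (hr i)]
  right_inv e := by
    ext i
    exact Nat.div_add_mod _ _

lemma flat_expandVars (hℓ : ∀ i, 0 < ℓ i) :
    (expandVars ℓ : MvPolynomial σ K →ₐ[K] MvPolynomial σ K).toRingHom.Flat := by
  refine flat_of_basis_mul _ (basisMonomials σ K) (basisMonomials σ K)
    (fun r : {r : σ →₀ ℕ // ∀ i, r i < ℓ i} ↦ monomial r 1) (exponentDivModEquiv hℓ) fun r d ↦ ?_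
  simp only [coe_basisMonomials, expandVars_monomial, monomial_mul, mul_one]
  rfl

lemma ker_constantCoeff_eq_idealOfVars :
    RingHom.ker (constantCoeff : MvPolynomial σ K →+* K) = idealOfVars σ K := by
  ext p
  rw [RingHom.mem_ker, constantCoeff_eq, ← pow_one (idealOfVars σ K), mem_pow_idealOfVars_iff']
  simp [Finsupp.degree_eq_zero_iff]

lemma constantCoeff_comp_expandVars (hℓ : ∀ i, 0 < ℓ i) :
    constantCoeff.comp (expandVars ℓ).toRingHom = (constantCoeff : MvPolynomial σ K →+* K) := by
  ext i
  · simp [expandVars]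
  · simp [expandVars, (hℓ i).ne']

lemma sup_idealOfVars_eq_comap_map_constantCoeff (I : Ideal (MvPolynomial σ K)) :
    I ⊔ idealOfVars σ K = (I.map constantCoeff).comap constantCoeff := by
  rw [Ideal.comap_map_of_surjective' (constantCoeff (R := K) (σ := σ))
    (fun a ↦ ⟨C a, constantCoeff_C _ a⟩), ker_constantCoeff_eq_idealOfVars]

lemma comap_expandVars_map_sup_idealOfVars (hℓ : ∀ i, 0 < ℓ i) (I : Ideal (MvPolynomial σ K)) :
    (I.map (expandVars ℓ).toRingHom ⊔ idealOfVars σ K).comap (expandVars ℓ).toRingHom =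
      I ⊔ idealOfVars σ K := by
  simp only [sup_idealOfVars_eq_comap_map_constantCoeff, Ideal.map_map, Ideal.comap_comap,
    constantCoeff_comp_expandVars hℓ]

variable (ℓ) in
lemma idealOfVars_le_radical_map_expandVars :
    idealOfVars σ K ≤ ((idealOfVars σ K).map (expandVars ℓ).toRingHom).radical := by
  rw [Ideal.span_le]
  rintro _ ⟨i, rfl⟩
  refine ⟨ℓ i, ?_⟩
  have expandVars_X : (expandVars ℓ).toRingHom (X i : MvPolynomial σ K) = X i ^ ℓ i := aeval_X _ i
  rw [← expandVars_X]
  exact Ideal.mem_map_of_mem _ (Ideal.subset_span (Set.mem_range_self i))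

end ExpandVars

theorem weighted_ideal_cohenMacaulay_iff_general {K σ : Type} [CommRing K] [IsNoetherianRing K]
    [Finite σ] {ℓ : σ → ℕ} (hℓ : ∀ i, 0 < ℓ i) {I J : Ideal (MvPolynomial σ K)}
    (hJ : J = I.map (expandVars ℓ))
    [((idealOfVars σ K).map (Ideal.Quotient.mk J)).IsPrime]
    [((idealOfVars σ K).map (Ideal.Quotient.mk I)).IsPrime] :
    IsCohenMacaulayLocal
      (Localization.AtPrime ((idealOfVars σ K).map (Ideal.Quotient.mk J))) ↔
    IsCohenMacaulayLocal
      (Localization.AtPrime ((idealOfVars σ K).map (Ideal.Quotient.mk I))) :=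
  isCohenMacaulayLocal_localization_quotient_iff_of_flat (flat_expandVars hℓ) hJ
    (comap_expandVars_map_sup_idealOfVars hℓ I) (idealOfVars_le_radical_map_expandVars ℓ)

/-- For a monomial ideal `J̄ ⊆ P = K[y_1,…,y_n]` and its extension
`J = Φ(J̄)S` under the `K`-algebra map `Φ(y_i) = x_i^{ℓ_i}`, the localization of `S/J` at
the maximal ideal generated by the images of the variables is Cohen–Macaulay iff the
localization of `P/J̄` at the maximal ideal generated by the images of the variables is. -/
theorem weighted_ideal_cohenMacaulay_iff
    (K : Type) [Field K] [Infinite K] (n : ℕ) (hn : 2 ≤ n)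
    (ℓ : Fin n → ℕ) (hℓ : ∀ i, 0 < ℓ i)
    (Jbar : Ideal (MvPolynomial (Fin n) K))
    (hmono : ∃ A : Set (Fin n →₀ ℕ),
      Jbar = Ideal.span ((fun d => (monomial d (1 : K) : MvPolynomial (Fin n) K)) '' A))
    (J : Ideal (MvPolynomial (Fin n) K))
    (hJ : J = Ideal.map
      (aeval (fun i : Fin n => (X i : MvPolynomial (Fin n) K) ^ ℓ i) :
        MvPolynomial (Fin n) K →ₐ[K] MvPolynomial (Fin n) K) Jbar)
    [hm1 : (Ideal.map (Ideal.Quotient.mk J)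
      (Ideal.span (Set.range (X : Fin n → MvPolynomial (Fin n) K)))).IsPrime]
    [hm2 : (Ideal.map (Ideal.Quotient.mk Jbar)
      (Ideal.span (Set.range (X : Fin n → MvPolynomial (Fin n) K)))).IsPrime] :
    IsCohenMacaulayLocal (Localization.AtPrime (Ideal.map (Ideal.Quotient.mk J)
      (Ideal.span (Set.range (X : Fin n → MvPolynomial (Fin n) K))))) ↔
    IsCohenMacaulayLocal (Localization.AtPrime (Ideal.map (Ideal.Quotient.mk Jbar)
      (Ideal.span (Set.range (X : Fin n → MvPolynomial (Fin n) K))))) := by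
  exact weighted_ideal_cohenMacaulay_iff_general hℓ hJ
end

section
/- Let P = K[y_1, …, y_n] with n ≥ 2 and let I_{2,n} = (y_i y_j : 1 ≤ i < j ≤ n) be the ideal generated by all squarefree monomials of degree 2 (equivalently, I_{2,n} = ⋂_{k=1}^n (y_1, …, y_{k−1}, y_{k+1}, …, y_n), the ideal of the n coordinate points of ℙ^{n−1}). Then for every h with 0 ≤ h ≤ n−2, dim_K Tor_{h+1}^P(P/I_{2,n}, P/(y_1, …, y_n)) = (h+1)·C(n, h+2), and Tor_j^P(P/I_{2,n}, P/(y_1, …, y_n)) = 0 for all j ≥ n; i.e. the total Betti numbers of I_{2,n} coincide with those of the rational normal curve in ℙ^n. -/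
/-!
On Koszul chains of the variables, the operator `e_l ∧ (· / X_l)` is a homotopy from the identity to
the specialization `X_l = 0`, `e_l = 0`. Specializing all variables in turn shows that the Koszul
complex resolves the quotient by the ideal of the variables, so `Tor` is Koszul homology.

Modulo the products `X_i X_j`, a polynomial is its family of restrictions to the coordinate axes,
which are subject only to having the same constant term. A chain is a cycle exactly when its
`e_A`-component vanishes on every axis in `A`, and the homology in degree `j + 1` lives in the
squarefree multidegrees `C` with `|C| = j + 2`. There the cycles are spanned by the `j + 2` elements
`X_i e_{C \ i}` and the boundaries by their signed sum, so a class is recorded by the differences of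
its `j + 2` signed coefficients.
-/

open CategoryTheory MvPolynomial

/-- `Tor_h^T(T/N, T/𝔪_T)` for `T = K[y_1,…,y_n]` with irrelevant maximal ideal `𝔪_T`. -/
noncomputable def torModule (K : Type) [Field K] (n : ℕ)
    (N : Ideal (MvPolynomial (Fin n) K)) (h : ℕ) : ModuleCat (MvPolynomial (Fin n) K) :=
  ((Tor (ModuleCat (MvPolynomial (Fin n) K)) h).obj
      (ModuleCat.of _ (MvPolynomial (Fin n) K ⧸ N))).obj
    (ModuleCat.of _ (MvPolynomial (Fin n) K ⧸
      Ideal.span (Set.range (X : Fin n → MvPolynomial (Fin n) K))))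

universe u

namespace Koszul

section Extend

variable {ι : Type*} (R : Type*) [Semiring R] (M : Type*) [AddCommMonoid M] [Module R M]

/-- The inclusion of the chains of degree `j` into all chains, by extension by zero. -/
def extend (j : ℕ) : (Set.powersetCard ι j → M) →ₗ[R] (Finset ι → M) where
  toFun ω A := if h : A.card = j then ω ⟨A, h⟩ else 0
  map_add' ω η := by ext A; by_cases h : A.card = j <;> simp [h]
  map_smul' r ω := by ext A; by_cases h : A.card = j <;> simp [h]

variable {R M}

lemma extend_of_card_eq {j : ℕ} (ω : Set.powersetCard ι j → M) {A : Finset ι} (h : A.card = j) :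
    extend R M j ω A = ω ⟨A, h⟩ :=
  dif_pos h

@[simp]
lemma extend_coe {j : ℕ} (ω : Set.powersetCard ι j → M) (A : Set.powersetCard ι j) :
    extend R M j ω A = ω A :=
  extend_of_card_eq ω A.2

lemma extend_of_card_ne {j : ℕ} (ω : Set.powersetCard ι j → M) {A : Finset ι} (h : A.card ≠ j) :
    extend R M j ω A = 0 :=
  dif_neg h

lemma extend_injective (j : ℕ) : Function.Injective (extend (ι := ι) R M j) := fun ω η h => by
  ext A
  simpa only [extend_coe] using congrFun h A

end Extend

section Differential

variable {ι : Type*} [LinearOrder ι]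

/-- The sign `(-1)^#{l ∈ A | l < i}` of the exterior product `e_i ∧ e_A`. -/
def sign (i : ι) (A : Finset ι) : ℤ := (-1) ^ (A.filter (· < i)).card

lemma sign_mul_self (i : ι) (A : Finset ι) : sign i A * sign i A = 1 := by
  rw [sign, ← mul_pow, neg_one_mul, neg_neg, one_pow]

lemma sign_smul_sign_smul {M : Type*} [AddCommGroup M] (i : ι) (A : Finset ι) (m : M) :
    sign i A • sign i A • m = m := by
  rw [smul_smul, sign_mul_self, one_smul]

lemma sign_insert {i l : ι} {A : Finset ι} (hl : l ∉ A) :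
    sign i (insert l A) = if l < i then -sign i A else sign i A := by
  rw [sign, Finset.filter_insert]
  split_ifs
  · rw [Finset.card_insert_of_notMem fun h => hl (Finset.mem_of_mem_filter _ h), pow_succ,
      mul_neg_one, sign]
  · rfl

lemma sign_mul_sign_insert {i l : ι} {A : Finset ι} (hi : i ∉ A) (hl : l ∉ A) (h : i ≠ l) :
    sign i A * sign l (insert i A) = -(sign l A * sign i (insert l A)) := by
  rw [sign_insert hi, sign_insert hl]
  rcases lt_or_gt_of_ne h with h | h <;> simp only [h, h.not_gt, if_true, if_false] <;> ring

lemma sign_insert_mul_sign_insert {i l : ι} {A : Finset ι} (hi : i ∉ A) (hl : l ∉ A)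
    (h : i ≠ l) : sign i (insert l A) * sign l (insert i A) = -(sign l A * sign i A) := by
  rw [sign_insert hi, sign_insert hl]
  rcases lt_or_gt_of_ne h with h | h <;> simp only [h, h.not_gt, if_true, if_false] <;> ring

variable [Fintype ι] {R : Type*} [CommRing R] (x : ι → R) {M : Type*} [AddCommGroup M] [Module R M]

/-- The Koszul differential of the sequence `x` with coefficients in `M`, on chains of all degrees
at once: a function `ω` on finite sets stands for the chain `∑_A ω(A) e_A`. -/
def totalD : (Finset ι → M) →ₗ[R] (Finset ι → M) where
  toFun ω A := ∑ i ∈ Aᶜ, sign i A • x i • ω (insert i A)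
  map_add' ω η := by
    ext A
    simp only [Pi.add_apply, smul_add, Finset.sum_add_distrib]
  map_smul' r ω := by
    ext A
    simp only [Pi.smul_apply, RingHom.id_apply, Finset.smul_sum]
    refine Finset.sum_congr rfl fun i _ => ?_
    rw [smul_comm (x i) r, smul_comm (sign i A) r]

lemma totalD_apply (ω : Finset ι → M) (A : Finset ι) :
    totalD x ω A = ∑ i ∈ Aᶜ, sign i A • x i • ω (insert i A) := rfl

lemma totalD_totalD (ω : Finset ι → M) : totalD x (totalD x ω) = 0 := by
  ext A
  simp only [totalD_apply, Pi.zero_apply, Finset.smul_sum]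
  rw [Finset.sum_sigma']
  refine Finset.sum_involution (fun p _ => ⟨p.2, p.1⟩) ?_ ?_ ?_ fun _ _ => rfl
  · rintro ⟨i, l⟩ h
    simp only [Finset.mem_sigma, Finset.mem_compl, Finset.mem_insert, not_or] at h
    obtain ⟨hi, hli, hl⟩ := h
    dsimp only
    rw [smul_comm (x i), smul_comm (x l) (sign i _), smul_smul, smul_smul (sign l A),
      sign_mul_sign_insert hi hl (Ne.symm hli), Finset.insert_comm l i, smul_comm (x i) (x l),
      neg_smul, neg_add_cancel]
  · rintro ⟨i, l⟩ h _ heq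
    simp only [Finset.mem_sigma, Finset.mem_compl, Finset.mem_insert, not_or] at h
    simp only [Sigma.mk.injEq, heq_eq_eq] at heq
    exact h.2.1 heq.1
  · rintro ⟨i, l⟩ h
    simp only [Finset.mem_sigma, Finset.mem_compl, Finset.mem_insert, not_or] at h ⊢
    exact ⟨h.2.2, Ne.symm h.2.1, h.1⟩

/-- The Koszul differential from degree `j + 1` to degree `j`. -/
def d (j : ℕ) : (Set.powersetCard ι (j + 1) → M) →ₗ[R] (Set.powersetCard ι j → M) :=
  LinearMap.funLeft R M Subtype.val ∘ₗ totalD x ∘ₗ extend R M (j + 1)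

lemma d_apply {j : ℕ} (ω : Set.powersetCard ι (j + 1) → M) (A : Set.powersetCard ι j) :
    d x j ω A = totalD x (extend R M (j + 1) ω) A := rfl

lemma extend_d {j : ℕ} (ω : Set.powersetCard ι (j + 1) → M) :
    extend R M j (d x j ω) = totalD x (extend R M (j + 1) ω) := by
  ext A
  by_cases h : A.card = j
  · rw [extend_of_card_eq _ h, d_apply]
  · rw [extend_of_card_ne _ h, totalD_apply]
    refine (Finset.sum_eq_zero fun i hi => ?_).symm
    rw [extend_of_card_ne, smul_zero, smul_zero]
    rwa [Finset.card_insert_of_notMem (Finset.mem_compl.1 hi), Ne, Nat.add_right_cancel_iff]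

lemma d_eq_zero_iff {j : ℕ} (ω : Set.powersetCard ι (j + 1) → M) :
    d x j ω = 0 ↔ totalD x (extend R M (j + 1) ω) = 0 := by
  rw [← extend_d, map_eq_zero_iff _ (extend_injective j)]

lemma d_d {j : ℕ} (ω : Set.powersetCard ι (j + 2) → M) : d x j (d x (j + 1) ω) = 0 := by
  rw [d_eq_zero_iff, extend_d, totalD_totalD]

lemma d_comp_val {j : ℕ} (η : Finset ι → M) (A : Set.powersetCard ι j) :
    d x j (fun B => η B) A = totalD x η A := by
  rw [d_apply, totalD_apply, totalD_apply]
  refine Finset.sum_congr rfl fun i hi => ?_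
  rw [extend_of_card_eq _ (by rw [Finset.card_insert_of_notMem (Finset.mem_compl.1 hi), A.2])]

lemma mem_range_d_iff {j : ℕ} (ω : Set.powersetCard ι j → M) :
    ω ∈ LinearMap.range (d (M := M) x j) ↔
      extend R M j ω ∈ LinearMap.range (totalD (M := M) x) := by
  constructor
  · rintro ⟨η, rfl⟩
    exact ⟨_, (extend_d x η).symm⟩
  · rintro ⟨η, hη⟩
    refine ⟨fun B => η B, funext fun A => ?_⟩
    rw [d_comp_val, hη, extend_coe]

end Differential

section Exactness

variable {ι : Type*} {k : Type*} [CommRing k]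

local notation "𝐗" => (X : ι → MvPolynomial ι k)

/-- Division by the variable `X l`, discarding the monomials that do not involve it. -/
noncomputable def divX (l : ι) : MvPolynomial ι k →+ MvPolynomial ι k :=
  AddMonoidHom.mk' (fun p => p.divMonomial (Finsupp.single l 1)) fun p q => add_divMonomial p q _

lemma divX_X_mul_self (l : ι) (p : MvPolynomial ι k) : divX l (X l * p) = p :=
  X_mul_divMonomial l p

lemma X_mul_divX_self (l : ι) (p : MvPolynomial ι k) :
    X l * divX l p = p - p.modMonomial (Finsupp.single l 1) :=
  eq_sub_of_add_eq (divMonomial_add_modMonomial_single p l)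

lemma coeff_divX (l : ι) (p : MvPolynomial ι k) (a : ι →₀ ℕ) :
    coeff a (divX l p) = coeff (Finsupp.single l 1 + a) p :=
  coeff_divMonomial _ _ _

lemma divX_X_mul {i l : ι} (h : i ≠ l) (p : MvPolynomial ι k) :
    divX l (X i * p) = X i * divX l p := by
  classical
  ext a
  rw [coeff_divX, coeff_X_mul', coeff_X_mul', coeff_divX]
  have hsupp : i ∈ (Finsupp.single l 1 + a).support ↔ i ∈ a.support := by simp [h]
  by_cases hi : i ∈ a.support
  · rw [if_pos hi, if_pos (hsupp.2 hi), add_tsub_assoc_of_le]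
    exact Finsupp.single_le_iff.2 (Nat.one_le_iff_ne_zero.2 (Finsupp.mem_support_iff.1 hi))
  · rw [if_neg hi, if_neg (mt hsupp.1 hi)]

variable [LinearOrder ι]

/-- The operator `e_l ∧ (· / X l)`: a homotopy from the identity of the Koszul complex of the
variables to the specialization `X l = 0`, `e_l = 0`. -/
noncomputable def homotopy (l : ι) (ω : Finset ι → MvPolynomial ι k) (A : Finset ι) :
    MvPolynomial ι k :=
  if l ∈ A then sign l (A.erase l) • divX l (ω (A.erase l)) else 0

/-- The specialization `X l = 0`, `e_l = 0` of a Koszul chain. -/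
noncomputable def specialize (l : ι) (ω : Finset ι → MvPolynomial ι k) (A : Finset ι) :
    MvPolynomial ι k :=
  if l ∈ A then 0 else (ω A).modMonomial (Finsupp.single l 1)

lemma homotopy_of_notMem {l : ι} {A : Finset ι} (hl : l ∉ A) (ω : Finset ι → MvPolynomial ι k) :
    homotopy l ω A = 0 :=
  if_neg hl

lemma homotopy_insert {l : ι} {A : Finset ι} (hl : l ∉ A) (ω : Finset ι → MvPolynomial ι k) :
    homotopy l ω (insert l A) = sign l A • divX l (ω A) := by
  rw [homotopy, if_pos (Finset.mem_insert_self l A), Finset.erase_insert hl]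

lemma coeff_specialize (l : ι) (ω : Finset ι → MvPolynomial ι k) (A : Finset ι) (a : ι →₀ ℕ) :
    coeff a (specialize l ω A) = if l ∈ A ∨ a l ≠ 0 then 0 else coeff a (ω A) := by
  have hle : Finsupp.single l 1 ≤ a ↔ a l ≠ 0 := by
    rw [Finsupp.single_le_iff, Nat.one_le_iff_ne_zero]
  by_cases hl : l ∈ A
  · rw [specialize, if_pos hl, if_pos (Or.inl hl), coeff_zero]
  rw [specialize, if_neg hl]
  by_cases ha : a l = 0
  · rw [coeff_modMonomial_of_not_le _ (by simpa [hle] using ha), if_neg (by simp [hl, ha])]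
  · rw [coeff_modMonomial_of_le _ (hle.2 ha), if_pos (Or.inr ha)]

variable [Fintype ι]

lemma totalD_homotopy_of_notMem {l : ι} {A : Finset ι} (hl : l ∉ A)
    (ω : Finset ι → MvPolynomial ι k) :
    totalD 𝐗 (homotopy l ω) A = X l * divX l (ω A) := by
  rw [totalD_apply, Finset.sum_eq_single_of_mem l (Finset.mem_compl.2 hl), homotopy_insert hl,
    smul_comm (X l), sign_smul_sign_smul, smul_eq_mul]
  intro i _ hil
  rw [homotopy_of_notMem (by simp [hl, hil.symm]), smul_zero, smul_zero]

lemma totalD_homotopy_insert {l : ι} {B : Finset ι} (hl : l ∉ B)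
    (ω : Finset ι → MvPolynomial ι k) :
    totalD 𝐗 (homotopy l ω) (insert l B) =
      ω (insert l B) - sign l B • divX l (totalD 𝐗 ω B) := by
  have hcompl : Bᶜ = insert l (insert l B)ᶜ := by
    rw [Finset.compl_insert, Finset.insert_erase (Finset.mem_compl.2 hl)]
  simp only [totalD_apply, smul_eq_mul]
  rw [hcompl, Finset.sum_insert (by simp), map_add, map_zsmul, divX_X_mul_self, smul_add,
    sign_smul_sign_smul, sub_add_cancel_left, map_sum, Finset.smul_sum, ← Finset.sum_neg_distrib]
  refine Finset.sum_congr rfl fun i hi => ?_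
  obtain ⟨hil, hiB⟩ : i ≠ l ∧ i ∉ B := by simpa using hi
  rw [Finset.insert_comm, homotopy_insert (by simp [hl, hil.symm]), map_zsmul, divX_X_mul hil,
    mul_smul_comm, smul_smul, smul_smul, sign_insert_mul_sign_insert hiB hl hil, neg_smul]

lemma totalD_homotopy_add_homotopy_totalD (l : ι) (ω : Finset ι → MvPolynomial ι k) :
    totalD 𝐗 (homotopy l ω) + homotopy l (totalD 𝐗 ω) = ω - specialize l ω := by
  ext1 A
  rw [Pi.add_apply, Pi.sub_apply]
  by_cases hl : l ∈ A
  · obtain ⟨B, hB, rfl⟩ : ∃ B, l ∉ B ∧ insert l B = A :=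
      ⟨A.erase l, Finset.notMem_erase l A, Finset.insert_erase hl⟩
    rw [totalD_homotopy_insert hB, homotopy_insert hB, sub_add_cancel, specialize,
      if_pos hl, sub_zero]
  · rw [totalD_homotopy_of_notMem hl, homotopy_of_notMem hl, add_zero, X_mul_divX_self,
      specialize, if_neg hl]

lemma totalD_homotopy {ω : Finset ι → MvPolynomial ι k} (hω : totalD 𝐗 ω = 0) (l : ι) :
    totalD 𝐗 (homotopy l ω) = ω - specialize l ω := by
  have hzero : homotopy l (0 : Finset ι → MvPolynomial ι k) = 0 := by
    ext1 A
    simp [homotopy]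
  rw [← totalD_homotopy_add_homotopy_totalD, hω, hzero, add_zero]

lemma exists_coeff_sub_totalD_eq_zero {ω : Finset ι → MvPolynomial ι k}
    (hω : totalD 𝐗 ω = 0) (S : Finset ι) :
    ∃ η : Finset ι → MvPolynomial ι k, ∀ l ∈ S, ∀ A a, l ∈ A ∨ a l ≠ 0 →
      coeff a ((ω - totalD 𝐗 η) A) = 0 := by
  induction S using Finset.induction_on with
  | empty => exact ⟨0, by simp⟩
  | insert i S _ ih =>
    obtain ⟨η, hη⟩ := ih
    set ω' := ω - totalD 𝐗 η with hω'
    have hcycle : totalD 𝐗 ω' = 0 := by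
      rw [hω', map_sub, hω, totalD_totalD, sub_zero]
    have hspec : ω - totalD 𝐗 (η + homotopy i ω') = specialize i ω' := by
      rw [map_add, totalD_homotopy hcycle, ← sub_sub, ← hω', sub_sub_cancel]
    refine ⟨η + homotopy i ω', fun l hl A a hla => ?_⟩
    rw [hspec, coeff_specialize]
    split_ifs with hi
    · rfl
    · obtain rfl | hl := Finset.mem_insert.1 hl
      exacts [absurd hla hi, hη l hl A a hla]

lemma constantCoeff_totalD (η : Finset ι → MvPolynomial ι k) (A : Finset ι) :
    constantCoeff (totalD 𝐗 η A) = 0 := by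
  simp [totalD_apply]

lemma mem_range_totalD_X {ω : Finset ι → MvPolynomial ι k} (hω : totalD 𝐗 ω = 0)
    (h₀ : constantCoeff (ω ∅) = 0) : ω ∈ LinearMap.range (totalD 𝐗) := by
  obtain ⟨η, hη⟩ := exists_coeff_sub_totalD_eq_zero hω Finset.univ
  refine ⟨η, Eq.symm (sub_eq_zero.1 (funext fun A => MvPolynomial.ext _ _ fun a => ?_))⟩
  by_cases hvar : ∃ l, l ∈ A ∨ a l ≠ 0
  · obtain ⟨l, hl⟩ := hvar
    rw [hη l (Finset.mem_univ l) A a hl, Pi.zero_apply, coeff_zero]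
  · push Not at hvar
    obtain rfl : A = ∅ := Finset.eq_empty_of_forall_notMem fun l => (hvar l).1
    obtain rfl : a = 0 := Finsupp.ext fun l => (hvar l).2
    rw [← constantCoeff_eq, Pi.sub_apply, map_sub, h₀, constantCoeff_totalD, sub_zero,
      Pi.zero_apply, map_zero]

lemma mem_range_d_X {j : ℕ} {ω : Set.powersetCard ι (j + 1) → MvPolynomial ι k}
    (hω : d 𝐗 j ω = 0) :
    ω ∈ LinearMap.range (d 𝐗 (j + 1)) := by
  refine (mem_range_d_iff _ _).2 (mem_range_totalD_X ((d_eq_zero_iff _ _).1 hω) ?_)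
  rw [extend_of_card_ne _ (by simp), map_zero]

lemma mem_range_d_zero_X {ω : Set.powersetCard ι 0 → MvPolynomial ι k}
    (h₀ : constantCoeff (ω ⟨∅, rfl⟩) = 0) :
    ω ∈ LinearMap.range (d 𝐗 0) := by
  refine (mem_range_d_iff _ _).2 (mem_range_totalD_X (funext fun A => ?_) ?_)
  · refine Finset.sum_eq_zero fun i _ => ?_
    rw [extend_of_card_ne _ (by simp), smul_zero, smul_zero]
  · rwa [extend_of_card_eq ω Finset.card_empty]

end Exactness

section CoordinateAxes

variable {ι : Type*} {k : Type*} [CommRing k]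

/-- The homomorphism `k[X_l : l ∈ ι] → k[X]` restricting a polynomial to the `i`-th coordinate
axis. -/
noncomputable def axisEval [DecidableEq ι] (i : ι) : MvPolynomial ι k →ₐ[k] Polynomial k :=
  aeval (Pi.single i Polynomial.X)

lemma axisEval_X [DecidableEq ι] (i l : ι) :
    axisEval (k := k) i (X l) = if l = i then Polynomial.X else 0 := by
  rw [axisEval, aeval_X, Pi.single_apply]

lemma coeff_axisEval [DecidableEq ι] (i : ι) (p : MvPolynomial ι k) (e : ℕ) :
    (axisEval i p).coeff e = coeff (Finsupp.single i e) p := by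
  induction p using MvPolynomial.induction_on generalizing e with
  | C c =>
    rw [← MvPolynomial.algebraMap_eq, AlgHom.commutes, Polynomial.algebraMap_eq,
      MvPolynomial.algebraMap_eq, Polynomial.coeff_C, coeff_C]
    simp only [eq_comm, Finsupp.single_eq_zero]
  | add p q hp hq => rw [map_add, Polynomial.coeff_add, coeff_add, hp, hq]
  | mul_X p l hp =>
    rw [map_mul, axisEval_X, coeff_mul_X']
    cases e with
    | zero => split_ifs <;> simp_all
    | succ e =>
      by_cases hl : l = i
      · subst hl
        simp [hp]
      · simp [hl]

lemma single_add_single_le_iff {i j : ι} (hij : i ≠ j) {a : ι →₀ ℕ} :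
    Finsupp.single i 1 + Finsupp.single j 1 ≤ a ↔ a i ≠ 0 ∧ a j ≠ 0 := by
  classical
  refine ⟨fun h => ?_, fun h l => ?_⟩
  · have hi : 1 ≤ a i := by simpa [hij] using h i
    have hj : 1 ≤ a j := by simpa [hij] using h j
    exact ⟨Nat.one_le_iff_ne_zero.1 hi, Nat.one_le_iff_ne_zero.1 hj⟩
  · rw [Finsupp.add_apply, Finsupp.single_apply, Finsupp.single_apply]
    grind

variable [LinearOrder ι]

variable (k ι) in
/-- The ideal generated by the squarefree monomials of degree two, which is the ideal of the union
of the coordinate axes. -/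
noncomputable abbrev pairIdeal : Ideal (MvPolynomial ι k) :=
  Ideal.span {g : MvPolynomial ι k | ∃ i j : ι, i < j ∧ g = X i * X j}

lemma mem_pairIdeal_iff_support {p : MvPolynomial ι k} :
    p ∈ pairIdeal ι k ↔ ∀ a ∈ p.support, ∃ i j, i < j ∧ a i ≠ 0 ∧ a j ≠ 0 := by
  have hgen : {g : MvPolynomial ι k | ∃ i j : ι, i < j ∧ g = X i * X j} =
      (fun a => monomial a (1 : k)) ''
        {a | ∃ i j : ι, i < j ∧ a = Finsupp.single i 1 + Finsupp.single j 1} := by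
    ext g
    simp only [Set.mem_ofPred_eq, Set.mem_image, X, monomial_mul, mul_one]
    grind
  rw [pairIdeal, hgen, mem_ideal_span_monomial_image]
  refine forall₂_congr fun a _ => ⟨?_, ?_⟩
  · rintro ⟨_, ⟨i, j, hij, rfl⟩, hle⟩
    exact ⟨i, j, hij, (single_add_single_le_iff hij.ne).1 hle⟩
  · rintro ⟨i, j, hij, ha⟩
    exact ⟨_, ⟨i, j, hij, rfl⟩, (single_add_single_le_iff hij.ne).2 ha⟩

lemma mem_pairIdeal_iff_axisEval [Nonempty ι] {p : MvPolynomial ι k} :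
    p ∈ pairIdeal ι k ↔ ∀ i, axisEval i p = 0 := by
  rw [mem_pairIdeal_iff_support]
  constructor
  · intro h i
    ext e
    rw [coeff_axisEval, Polynomial.coeff_zero]
    by_contra hne
    obtain ⟨l, m, hlm, hl, hm⟩ := h _ (mem_support_iff.2 hne)
    exact hlm.ne (by grind)
  · intro h a ha
    by_contra! hpair
    have hcard : a.support.card ≤ 1 := Finset.card_le_one.2 fun i hi j hj => by
      rw [Finsupp.mem_support_iff] at hi hj
      rcases lt_trichotomy i j with hij | hij | hij
      exacts [absurd (hpair i j hij hi) hj, hij, absurd (hpair j i hij hj) hi]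
    obtain ⟨i, hi⟩ := Finsupp.card_support_le_one.1 hcard
    rw [mem_support_iff, hi, ← coeff_axisEval, h i] at ha
    exact ha (Polynomial.coeff_zero _)

/-- The restriction of the coordinate ring of the union of the axes to the `i`-th axis. -/
noncomputable def toAxis (i : ι) : (MvPolynomial ι k ⧸ pairIdeal ι k) →ₐ[k] Polynomial k :=
  Ideal.Quotient.liftₐ (pairIdeal ι k) (axisEval i) fun p hp => by
    have : Nonempty ι := ⟨i⟩
    exact mem_pairIdeal_iff_axisEval.1 hp i

lemma toAxis_mk (i : ι) (p : MvPolynomial ι k) :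
    toAxis i (Ideal.Quotient.mk (pairIdeal ι k) p) = axisEval i p := rfl

lemma toAxis_X_smul (i l : ι) (m : MvPolynomial ι k ⧸ pairIdeal ι k) :
    toAxis i ((X l : MvPolynomial ι k) • m) = if l = i then Polynomial.X * toAxis i m else 0 := by
  obtain ⟨p, rfl⟩ := Ideal.Quotient.mk_surjective m
  change axisEval i (X l * p) = if l = i then Polynomial.X * axisEval i p else 0
  rw [map_mul, axisEval_X, ite_mul, zero_mul]

lemma coeff_zero_toAxis (i l : ι) (m : MvPolynomial ι k ⧸ pairIdeal ι k) :
    (toAxis i m).coeff 0 = (toAxis l m).coeff 0 := by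
  obtain ⟨p, rfl⟩ := Ideal.Quotient.mk_surjective m
  rw [toAxis_mk, toAxis_mk, coeff_axisEval, coeff_axisEval, Finsupp.single_zero,
    Finsupp.single_zero]

lemma eq_of_toAxis_eq [Nonempty ι] {m m' : MvPolynomial ι k ⧸ pairIdeal ι k}
    (h : ∀ i, toAxis i m = toAxis i m') : m = m' := by
  obtain ⟨p, rfl⟩ := Ideal.Quotient.mk_surjective m
  obtain ⟨q, rfl⟩ := Ideal.Quotient.mk_surjective m'
  refine Ideal.Quotient.eq.2 (mem_pairIdeal_iff_axisEval.2 fun i => ?_)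
  rw [map_sub, ← toAxis_mk, ← toAxis_mk, h i, sub_self]

lemma exists_toAxis_eq [Finite ι] (c : k) (f : ι → Polynomial k) (hf : ∀ i, (f i).coeff 0 = c) :
    ∃ m : MvPolynomial ι k ⧸ pairIdeal ι k, ∀ i, toAxis i m = f i := by
  cases nonempty_fintype ι
  refine ⟨Ideal.Quotient.mk _ (C c +
    ∑ l, Polynomial.aeval (X l : MvPolynomial ι k) (f l - Polynomial.C c)), fun i => ?_⟩
  rw [toAxis_mk, map_add, map_sum, Finset.sum_eq_single_of_mem i (Finset.mem_univ i)]
  · rw [← Polynomial.aeval_algHom_apply, axisEval_X, if_pos rfl, Polynomial.aeval_X_left_apply,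
      ← MvPolynomial.algebraMap_eq, AlgHom.commutes, Polynomial.algebraMap_eq, add_sub_cancel]
  · intro l _ hl
    rw [← Polynomial.aeval_algHom_apply, axisEval_X, if_neg hl,
      ← Polynomial.coeff_zero_eq_aeval_zero', Polynomial.coeff_sub, hf, Polynomial.coeff_C_zero,
      sub_self, map_zero]

end CoordinateAxes

section CoordinateAxesHomology

variable {ι : Type*} [LinearOrder ι] {k : Type*} [CommRing k]

local notation "𝐗" => (X : ι → MvPolynomial ι k)

local notation "𝐑" => MvPolynomial ι k ⧸ pairIdeal ι k

/-- The coefficient of a Koszul chain at `X i • e_{C \ {i}}`, with the sign of `e_i ∧ e_{C \ {i}}`.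
For `i ∈ C` these chains span, together with `e_C`, the part of squarefree multidegree `C` of the
Koszul complex. -/
noncomputable def linearCoeff (C : Finset ι) (i : ι) : (Finset ι → 𝐑) →ₗ[k] k :=
  sign i (C.erase i) •
    Polynomial.lcoeff k 1 ∘ₗ (toAxis i).toLinearMap ∘ₗ LinearMap.proj (C.erase i)

lemma linearCoeff_apply (C : Finset ι) (i : ι) (ω : Finset ι → 𝐑) :
    linearCoeff C i ω = sign i (C.erase i) • (toAxis i (ω (C.erase i))).coeff 1 := rfl

lemma linearCoeff_extend_of_card_ne {j : ℕ} (ω : Set.powersetCard ι (j + 1) → 𝐑) {C : Finset ι}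
    (hC : C.card ≠ j + 2) {i : ι} (hi : i ∈ C) :
    linearCoeff C i (extend (MvPolynomial ι k) 𝐑 (j + 1) ω) = 0 := by
  have hcard : (C.erase i).card ≠ j + 1 := fun h => hC (by rw [← Finset.card_erase_add_one hi, h])
  rw [linearCoeff_apply, extend_of_card_ne _ hcard, map_zero, Polynomial.coeff_zero, smul_zero]

lemma exists_toAxis_eq_smul_divX [Finite ι] {C : Finset ι} {ω : Finset ι → 𝐑}
    (hlin : ∀ i ∈ C, ∀ l ∈ C, linearCoeff C i ω = linearCoeff C l ω) :
    ∃ m : 𝐑, ∀ i ∈ C, toAxis i m = sign i (C.erase i) • (toAxis i (ω (C.erase i))).divX := by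
  rcases C.eq_empty_or_nonempty with rfl | ⟨l, hl⟩
  · exact ⟨0, by simp⟩
  obtain ⟨m, hm⟩ := exists_toAxis_eq (ι := ι) (linearCoeff C l ω)
    (fun i => if i ∈ C then sign i (C.erase i) • (toAxis i (ω (C.erase i))).divX
      else Polynomial.C (linearCoeff C l ω)) fun i => by
        split_ifs with hi
        · rw [← hlin i hi l hl, linearCoeff_apply, Polynomial.coeff_smul, Polynomial.coeff_divX]
        · exact Polynomial.coeff_C_zero
  exact ⟨m, fun i hi => by rw [hm, if_pos hi]⟩

open Set.powersetCard (ofFinEmbEquiv mem_range_ofFinEmbEquiv_symm_iff_mem)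

lemma ofFinEmbEquiv_symm_mem {j : ℕ} (C : Set.powersetCard ι j) (t : Fin j) :
    ofFinEmbEquiv.symm C t ∈ C.1 :=
  (mem_range_ofFinEmbEquiv_symm_iff_mem C _).1 ⟨t, rfl⟩

variable [Fintype ι]

lemma toAxis_totalD (ω : Finset ι → 𝐑) (A : Finset ι) (i : ι) :
    toAxis i (totalD 𝐗 ω A) =
      if i ∈ A then 0 else sign i A • (Polynomial.X * toAxis i (ω (insert i A))) := by
  rw [totalD_apply, map_sum]
  simp only [map_zsmul, toAxis_X_smul, smul_ite, smul_zero, Finset.sum_ite_eq',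
    Finset.mem_compl, ite_not]

lemma linearCoeff_totalD {C : Finset ι} {i : ι} (hi : i ∈ C) (ω : Finset ι → 𝐑) :
    linearCoeff C i (totalD 𝐗 ω) = (toAxis i (ω C)).coeff 0 := by
  rw [linearCoeff_apply, toAxis_totalD, if_neg (Finset.notMem_erase i C), Finset.insert_erase hi,
    Polynomial.coeff_smul, sign_smul_sign_smul, Polynomial.coeff_X_mul]

lemma totalD_eq_zero_iff [Nonempty ι] (ω : Finset ι → 𝐑) :
    totalD 𝐗 ω = 0 ↔ ∀ A, ∀ i ∈ A, toAxis i (ω A) = 0 := by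
  constructor
  · intro h A i hi
    have hsign : 0 = sign i (A.erase i) • (Polynomial.X * toAxis i (ω A)) := by
      simpa [h, hi] using toAxis_totalD ω (A.erase i) i
    have hX : Polynomial.X * toAxis i (ω A) = 0 := by
      rw [← sign_smul_sign_smul i (A.erase i) (Polynomial.X * _), ← hsign, smul_zero]
    exact Polynomial.isRegular_X.left.mul_left_eq_zero_iff.1 hX
  · intro h
    ext1 A
    refine eq_of_toAxis_eq fun i => ?_
    rw [toAxis_totalD, h _ i (Finset.mem_insert_self i A), mul_zero, smul_zero, ite_self,
      Pi.zero_apply, map_zero]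

lemma mem_range_totalD_of_linearCoeff_eq [Nonempty ι] {ω : Finset ι → 𝐑}
    (hω : totalD 𝐗 ω = 0) (h₀ : ω ∅ = 0)
    (hlin : ∀ C, ∀ i ∈ C, ∀ l ∈ C, linearCoeff C i ω = linearCoeff C l ω) :
    ω ∈ LinearMap.range (totalD 𝐗) := by
  rw [totalD_eq_zero_iff] at hω
  choose η hη using fun C => exists_toAxis_eq_smul_divX (hlin C)
  refine ⟨η, funext fun A => eq_of_toAxis_eq fun i => ?_⟩
  rw [toAxis_totalD]
  split_ifs with hi
  · exact (hω A i hi).symm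
  have hcoeff : (toAxis i (ω A)).coeff 0 = 0 := by
    rcases A.eq_empty_or_nonempty with rfl | ⟨l, hl⟩
    · rw [h₀, map_zero, Polynomial.coeff_zero]
    · rw [coeff_zero_toAxis i l, hω A l hl, Polynomial.coeff_zero]
  calc sign i A • (Polynomial.X * toAxis i (η (insert i A)))
      = Polynomial.X * (toAxis i (ω A)).divX := by
        rw [hη _ i (Finset.mem_insert_self i A), Finset.erase_insert hi, mul_smul_comm,
          sign_smul_sign_smul]
    _ = toAxis i (ω A) := by
        rw [← add_zero (_ * _), ← Polynomial.C_0, ← hcoeff, Polynomial.X_mul_divX_add]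

lemma mem_range_d_iff_linearCoeff_eq [Nonempty ι] {j : ℕ} {ω : Set.powersetCard ι (j + 1) → 𝐑}
    (hω : d 𝐗 j ω = 0) :
    ω ∈ LinearMap.range (d (M := 𝐑) 𝐗 (j + 1)) ↔
      ∀ C : Set.powersetCard ι (j + 2), ∀ i ∈ C.1, ∀ l ∈ C.1,
        linearCoeff C i (extend (MvPolynomial ι k) 𝐑 (j + 1) ω) =
          linearCoeff C l (extend (MvPolynomial ι k) 𝐑 (j + 1) ω) := by
  rw [mem_range_d_iff]
  constructor
  · rintro ⟨η, hη⟩ C i hi l hl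
    rw [← hη, linearCoeff_totalD hi, linearCoeff_totalD hl, coeff_zero_toAxis]
  · intro h
    refine mem_range_totalD_of_linearCoeff_eq ((d_eq_zero_iff _ _).1 hω)
      (extend_of_card_ne _ (by simp)) fun C i hi l hl => ?_
    by_cases hC : C.card = j + 2
    · exact h ⟨C, hC⟩ i hi l hl
    · rw [linearCoeff_extend_of_card_ne ω hC hi, linearCoeff_extend_of_card_ne ω hC hl]

lemma exists_cycle_linearCoeff_eq [Nonempty ι] {j : ℕ} (v : Set.powersetCard ι (j + 2) → ι → k) :
    ∃ ω : Set.powersetCard ι (j + 1) → 𝐑, d 𝐗 j ω = 0 ∧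
      ∀ C : Set.powersetCard ι (j + 2), ∀ i ∈ C.1,
        linearCoeff C i (extend (MvPolynomial ι k) 𝐑 (j + 1) ω) = v C i := by
  have hex (A : Set.powersetCard ι (j + 1)) : ∃ m : 𝐑, ∀ i, toAxis i m = if i ∈ A.1 then 0 else
      Polynomial.C (sign i A.1 • extend k (ι → k) (j + 2) v (insert i A.1) i) * Polynomial.X :=
    exists_toAxis_eq 0 _ fun i => by split_ifs <;> simp
  choose ω hω using hex
  refine ⟨ω, (d_eq_zero_iff _ _).2 ((totalD_eq_zero_iff _).2 fun A i hi => ?_), fun C i hi => ?_⟩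
  · by_cases hA : A.card = j + 1
    · rw [extend_of_card_eq _ hA, hω, if_pos hi]
    · rw [extend_of_card_ne _ hA, map_zero]
  · have hcard : (C.1.erase i).card = j + 1 := by
      rw [Finset.card_erase_of_mem hi, C.2, Nat.add_succ_sub_one]
    rw [linearCoeff_apply, extend_of_card_eq _ hcard, hω, if_neg (Finset.notMem_erase i C.1),
      Polynomial.coeff_C_mul_X, if_pos rfl, sign_smul_sign_smul, Finset.insert_erase hi,
      extend_coe]

variable (ι k) in
/-- The coordinates of a Koszul cycle modulo boundaries: in each squarefree multidegree `C` of size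
`j + 2`, the differences between its `linearCoeff` at the smallest element of `C` and at the
others. -/
noncomputable def cycleCoord (j : ℕ) :
    LinearMap.ker (d (M := 𝐑) 𝐗 j) →ₗ[k] (Set.powersetCard ι (j + 2) → Fin (j + 1) → k) :=
  LinearMap.pi fun C => LinearMap.pi fun t =>
    (linearCoeff C (ofFinEmbEquiv.symm C t.succ) - linearCoeff C (ofFinEmbEquiv.symm C 0)) ∘ₗ
      (extend (MvPolynomial ι k) 𝐑 (j + 1) ∘ₗ (LinearMap.ker (d 𝐗 j)).subtype).restrictScalars k

lemma cycleCoord_apply (j : ℕ) (ω : LinearMap.ker (d (M := 𝐑) 𝐗 j))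
    (C : Set.powersetCard ι (j + 2)) (t : Fin (j + 1)) :
    cycleCoord ι k j ω C t =
      linearCoeff C (ofFinEmbEquiv.symm C t.succ) (extend (MvPolynomial ι k) 𝐑 _ ω.1) -
        linearCoeff C (ofFinEmbEquiv.symm C 0) (extend (MvPolynomial ι k) 𝐑 _ ω.1) := rfl

lemma cycleCoord_eq_zero_iff [Nonempty ι] {j : ℕ} (ω : LinearMap.ker (d (M := 𝐑) 𝐗 j)) :
    cycleCoord ι k j ω = 0 ↔ ω.1 ∈ LinearMap.range (d (M := 𝐑) 𝐗 (j + 1)) := by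
  rw [mem_range_d_iff_linearCoeff_eq ω.2]
  constructor
  · intro h C
    suffices hmin : ∀ i ∈ C.1, linearCoeff C i (extend (MvPolynomial ι k) 𝐑 (j + 1) ω.1) =
        linearCoeff C (ofFinEmbEquiv.symm C 0) (extend (MvPolynomial ι k) 𝐑 (j + 1) ω.1) from
      fun i hi l hl => (hmin i hi).trans (hmin l hl).symm
    intro i hi
    obtain ⟨t, rfl⟩ := (mem_range_ofFinEmbEquiv_symm_iff_mem C i).2 hi
    cases t using Fin.cases with
    | zero => rfl
    | succ t => exact sub_eq_zero.1 (congrFun (congrFun h C) t)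
  · intro h
    ext C t
    exact sub_eq_zero.2 (h C _ (ofFinEmbEquiv_symm_mem C _) _ (ofFinEmbEquiv_symm_mem C _))

lemma cycleCoord_surjective [Nonempty ι] (j : ℕ) : Function.Surjective (cycleCoord ι k j) := by
  intro w
  obtain ⟨ω, hω, hcoeff⟩ := exists_cycle_linearCoeff_eq fun C =>
    Function.extend (ofFinEmbEquiv.symm C) (Fin.cons 0 (w C)) 0
  refine ⟨⟨ω, hω⟩, ?_⟩
  ext C t
  have hinj := (ofFinEmbEquiv.symm C).injective
  rw [cycleCoord_apply, hcoeff C _ (ofFinEmbEquiv_symm_mem C _),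
    hcoeff C _ (ofFinEmbEquiv_symm_mem C _), hinj.extend_apply, hinj.extend_apply, Fin.cons_succ,
    Fin.cons_zero, sub_zero]

end CoordinateAxesHomology

section Coefficients

variable {ι : Type*} [LinearOrder ι] [Fintype ι] {R : Type*} [CommRing R] (x : ι → R)
  {M : Type*} [AddCommGroup M] [Module R M]

variable (M) in
/-- The Koszul boundaries inside the cycles of degree `j + 1`. -/
def boundaries (j : ℕ) : Submodule R (LinearMap.ker (d (M := M) x j)) :=
  LinearMap.range ((d x (j + 1)).codRestrict (LinearMap.ker (d (M := M) x j)) (d_d x))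

variable {x} in
lemma mem_boundaries_iff {j : ℕ} {ω : LinearMap.ker (d (M := M) x j)} :
    ω ∈ boundaries x M j ↔ ω.1 ∈ LinearMap.range (d (M := M) x (j + 1)) := by
  simp only [boundaries, LinearMap.mem_range, Subtype.ext_iff]
  rfl

open TensorProduct in
lemma piScalarRight_lTensor_d (j : ℕ) (z : M ⊗[R] (Set.powersetCard ι (j + 1) → R)) :
    piScalarRight R R M _ ((d x j).lTensor M z) = d x j (piScalarRight R R M _ z) := by
  induction z with
  | zero => simp only [map_zero]
  | add z w hz hw => simp only [map_add, hz, hw]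
  | tmul m ω =>
    rw [LinearMap.lTensor_tmul]
    ext A
    simp only [piScalarRight_apply, piScalarRightHom_tmul, d_apply, totalD_apply, Finset.sum_smul]
    refine Finset.sum_congr rfl fun i hi => ?_
    have hcard : (insert i A.1).card = j + 1 := by
      rw [Finset.card_insert_of_notMem (Finset.mem_compl.1 hi), A.2]
    rw [extend_of_card_eq _ hcard, extend_of_card_eq _ hcard, smul_assoc, smul_eq_mul, mul_smul]

end Coefficients

section Complex

variable {ι R : Type u} [LinearOrder ι] [Fintype ι] [CommRing R]

/-- The Koszul complex of the sequence `x` with coefficients in `M`. -/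
noncomputable def koszulComplex (x : ι → R) (M : ModuleCat.{u} R) : ChainComplex (ModuleCat R) ℕ :=
  ChainComplex.of (fun j => ModuleCat.of R (Set.powersetCard ι j → M))
    (fun j => ModuleCat.ofHom (d x j)) fun _ => ModuleCat.hom_ext (LinearMap.ext (d_d x))

lemma koszulComplex_d (x : ι → R) (M : ModuleCat.{u} R) (j : ℕ) :
    (koszulComplex x M).d (j + 1) j = ModuleCat.ofHom (d x j) :=
  ChainComplex.of_d (fun j => ModuleCat.of R (Set.powersetCard ι j → M))
    (fun j => ModuleCat.ofHom (d x j)) j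

/-- A segment of the Koszul complex. -/
noncomputable def koszulShortComplex (x : ι → R) (M : ModuleCat.{u} R) (j : ℕ) :
    ShortComplex (ModuleCat.{u} R) :=
  ShortComplex.mk (ModuleCat.ofHom (d (M := M) x (j + 1))) (ModuleCat.ofHom (d (M := M) x j))
    (ModuleCat.hom_ext (LinearMap.ext (d_d x)))

lemma koszulComplex_sc' (x : ι → R) (M : ModuleCat.{u} R) (j : ℕ) :
    (koszulComplex x M).sc' (j + 2) (j + 1) j = koszulShortComplex x M j := by
  simp only [HomologicalComplex.sc', HomologicalComplex.shortComplexFunctor', koszulComplex_d,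
    koszulShortComplex]
  rfl

lemma koszulComplex_exactAt_succ {x : ι → R} {M : ModuleCat.{u} R} {j : ℕ}
    (h : LinearMap.ker (d (M := M) x j) ≤ LinearMap.range (d x (j + 1))) :
    (koszulComplex x M).ExactAt (j + 1) := by
  rw [HomologicalComplex.exactAt_iff' _ (j + 2) (j + 1) j (by simp) (by simp),
    koszulComplex_sc', ShortComplex.moduleCat_exact_iff_ker_sub_range]
  exact h

/-- Tensoring the Koszul complex with `M` gives the Koszul complex with coefficients in `M`. -/
noncomputable def tensorKoszulIso (x : ι → R) (M : ModuleCat.{u} R) :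
    (((MonoidalCategory.tensoringLeft _).obj M).mapHomologicalComplex _).obj
      (koszulComplex x (ModuleCat.of R R)) ≅ koszulComplex x M :=
  HomologicalComplex.Hom.isoOfComponents
    (fun j => (TensorProduct.piScalarRight R R M (Set.powersetCard ι j)).toModuleIso) (by
      rintro _ j rfl
      change _ = MonoidalCategory.whiskerLeft M ((koszulComplex x _).d (j + 1) j) ≫ _
      rw [koszulComplex_d, koszulComplex_d]
      exact ModuleCat.hom_ext (LinearMap.ext fun z => (piScalarRight_lTensor_d x j z).symm))

/-- The homology of the Koszul complex in positive degrees, as cycles modulo boundaries. -/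
noncomputable def koszulHomologyIso (x : ι → R) (M : ModuleCat.{u} R) (j : ℕ) :
    (koszulComplex x M).homology (j + 1) ≅
      ModuleCat.of R (LinearMap.ker (d (M := M) x j) ⧸ boundaries x M j) :=
  (HomologicalComplex.homologyFunctorIso' _ _ (j + 2) (j + 1) j (by simp) (by simp)).app _ ≪≫
    ShortComplex.homologyMapIso (eqToIso (koszulComplex_sc' x M j)) ≪≫
    ShortComplex.moduleCatHomologyIso _

end Complex

section Resolution

variable {ι k : Type u} [CommRing k]

local notation "𝐏" => MvPolynomial ι k

local notation "𝐗" => (X : ι → MvPolynomial ι k)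

lemma mem_idealOfVars_iff {p : 𝐏} : p ∈ idealOfVars ι k ↔ constantCoeff p = 0 := by
  simpa [constantCoeff_eq, Finsupp.degree_eq_zero_iff] using mem_pow_idealOfVars_iff' 1 p

variable (ι k) in
/-- The augmentation of the Koszul complex of the variables. -/
noncomputable def augmentation : (Set.powersetCard ι 0 → 𝐏) →ₗ[𝐏] 𝐏 ⧸ idealOfVars ι k :=
  (idealOfVars ι k).mkQ ∘ₗ LinearMap.proj ⟨∅, rfl⟩

lemma augmentation_surjective : Function.Surjective (augmentation ι k) :=
  (Submodule.mkQ_surjective _).comp (LinearMap.proj_surjective _)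

lemma mem_ker_augmentation_iff {ω : Set.powersetCard ι 0 → 𝐏} :
    ω ∈ LinearMap.ker (augmentation ι k) ↔ constantCoeff (ω ⟨∅, rfl⟩) = 0 :=
  (Submodule.Quotient.mk_eq_zero _).trans mem_idealOfVars_iff

variable [LinearOrder ι] [Fintype ι]

lemma ker_augmentation : LinearMap.ker (augmentation ι k) = LinearMap.range (d 𝐗 0) := by
  refine le_antisymm (fun ω hω => mem_range_d_zero_X (mem_ker_augmentation_iff.1 hω)) ?_
  rintro _ ⟨η, rfl⟩
  exact mem_ker_augmentation_iff.2 (constantCoeff_totalD _ _)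

lemma koszulComplex_d_comp_augmentation :
    (koszulComplex 𝐗 (ModuleCat.of 𝐏 𝐏)).d 1 0 ≫ ModuleCat.ofHom (augmentation ι k) = 0 := by
  rw [koszulComplex_d]
  exact ModuleCat.hom_ext (LinearMap.range_le_ker_iff.1 ker_augmentation.ge)

variable (ι k) in
/-- The Koszul complex of the variables is a projective resolution of the quotient by the ideal they
generate. -/
noncomputable def koszulResolution :
    ProjectiveResolution (ModuleCat.of 𝐏 (𝐏 ⧸ idealOfVars ι k)) where
  complex := koszulComplex 𝐗 (ModuleCat.of 𝐏 𝐏)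
  projective j := inferInstanceAs (Projective (ModuleCat.of 𝐏 (Set.powersetCard ι j → 𝐏)))
  π := (ChainComplex.toSingle₀Equiv _ _).symm
    ⟨ModuleCat.ofHom (augmentation ι k), koszulComplex_d_comp_augmentation⟩
  quasiIso := ⟨fun j => by
    cases j with
    | zero =>
      rw [ChainComplex.quasiIsoAt₀_iff, ShortComplex.quasiIso_iff_of_zeros' _ rfl rfl rfl]
      refine ⟨?_, (ModuleCat.epi_iff_surjective _).2 augmentation_surjective⟩
      rw [ShortComplex.moduleCat_exact_iff_ker_sub_range]
      change LinearMap.ker (augmentation ι k) ≤ LinearMap.range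
        ((koszulComplex 𝐗 (ModuleCat.of 𝐏 𝐏)).d 1 0).hom
      rw [koszulComplex_d]
      exact ker_augmentation.le
    | succ j =>
      rw [quasiIsoAt_iff_exactAt' _ _ (ChainComplex.exactAt_succ_single_obj _ _)]
      exact koszulComplex_exactAt_succ fun ω hω => mem_range_d_X hω⟩

/-- `Tor` against the quotient by the ideal of the variables is Koszul homology. -/
noncomputable def torIso (M : ModuleCat.{u} 𝐏) (j : ℕ) :
    ((Tor (ModuleCat 𝐏) (j + 1)).obj M).obj (ModuleCat.of 𝐏 (𝐏 ⧸ idealOfVars ι k)) ≅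
      ModuleCat.of 𝐏 (LinearMap.ker (d (M := M) 𝐗 j) ⧸ boundaries 𝐗 M j) :=
  (koszulResolution ι k).isoLeftDerivedObj ((MonoidalCategory.tensoringLeft _).obj M) (j + 1) ≪≫
    (HomologicalComplex.homologyFunctor _ _ (j + 1)).mapIso (tensorKoszulIso 𝐗 M) ≪≫
    koszulHomologyIso 𝐗 M j

local notation "𝐑" => MvPolynomial ι k ⧸ pairIdeal ι k

lemma restrictScalars_boundaries [Nonempty ι] (j : ℕ) :
    (boundaries 𝐗 𝐑 j).restrictScalars k = LinearMap.ker (cycleCoord ι k j) := by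
  ext ω
  rw [Submodule.restrictScalars_mem, mem_boundaries_iff, LinearMap.mem_ker, cycleCoord_eq_zero_iff]

variable (ι k) in
/-- The Koszul homology of the union of the coordinate axes. -/
noncomputable def axesHomologyEquiv [Nonempty ι] (j : ℕ) :
    (LinearMap.ker (d (M := 𝐑) 𝐗 j) ⧸ boundaries 𝐗 𝐑 j) ≃ₗ[k]
      (Set.powersetCard ι (j + 2) → Fin (j + 1) → k) :=
  (Submodule.Quotient.restrictScalarsEquiv k _).symm ≪≫ₗ
    Submodule.quotEquivOfEq _ _ (restrictScalars_boundaries j) ≪≫ₗ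
    (cycleCoord ι k j).quotKerEquivOfSurjective (cycleCoord_surjective j)

end Resolution

/-- Restricting the scalars of the bundled module `M` recovers the given `k`-module structure. -/
def restrictScalarsOfEquiv (k R M : Type u) [CommRing k] [CommRing R] [Algebra k R]
    [AddCommGroup M] [Module R M] [Module k M] [IsScalarTower k R M] :
    (ModuleCat.restrictScalars (algebraMap k R)).obj (ModuleCat.of R M) ≃ₗ[k] M where
  __ := AddEquiv.refl M
  map_smul' := algebraMap_smul R (M := M)

/-- `Tor` of the union of the coordinate axes against the origin, as a `k`-module. -/
noncomputable def torPairIdealEquiv (ι k : Type u) [CommRing k] [LinearOrder ι] [Fintype ι]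
    [Nonempty ι] (j : ℕ) :
    (ModuleCat.restrictScalars (algebraMap k (MvPolynomial ι k))).obj
        (((Tor (ModuleCat (MvPolynomial ι k)) (j + 1)).obj
            (ModuleCat.of _ (MvPolynomial ι k ⧸ pairIdeal ι k))).obj
          (ModuleCat.of _ (MvPolynomial ι k ⧸ idealOfVars ι k))) ≃ₗ[k]
      (Set.powersetCard ι (j + 2) → Fin (j + 1) → k) :=
  ((ModuleCat.restrictScalars _).mapIso (torIso _ j)).toLinearEquiv ≪≫ₗ
    restrictScalarsOfEquiv k (MvPolynomial ι k) _ ≪≫ₗ axesHomologyEquiv ι k j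

end Koszul

theorem betti_numbers_of_squarefree_degree_two_ideal_general
    (k ι : Type u) [CommRing k] [LinearOrder ι] [Fintype ι] [Nonempty ι] :
    (∀ h : ℕ, Nonempty
      ((ModuleCat.restrictScalars (algebraMap k (MvPolynomial ι k))).obj
          (((Tor (ModuleCat (MvPolynomial ι k)) (h + 1)).obj
              (ModuleCat.of _ (MvPolynomial ι k ⧸ Koszul.pairIdeal ι k))).obj
            (ModuleCat.of _ (MvPolynomial ι k ⧸ idealOfVars ι k))) ≃ₗ[k]
        (Fin ((h + 1) * (Fintype.card ι).choose (h + 2)) → k))) ∧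
    (∀ j : ℕ, Fintype.card ι ≤ j →
      Subsingleton
        (((Tor (ModuleCat (MvPolynomial ι k)) j).obj
            (ModuleCat.of _ (MvPolynomial ι k ⧸ Koszul.pairIdeal ι k))).obj
          (ModuleCat.of _ (MvPolynomial ι k ⧸ idealOfVars ι k)))) := by
  constructor
  · intro h
    have hcard : Nat.card (Set.powersetCard ι (h + 2) × Fin (h + 1)) =
        (h + 1) * (Fintype.card ι).choose (h + 2) := by
      rw [Nat.card_prod, Set.powersetCard.card, Nat.card_eq_fintype_card, Nat.card_fin, mul_comm]
    exact ⟨Koszul.torPairIdealEquiv ι k h ≪≫ₗ (LinearEquiv.curry k k _ _).symm ≪≫ₗ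
      LinearEquiv.funCongrLeft k k (Finite.equivFinOfCardEq hcard).symm⟩
  · intro j hj
    obtain ⟨j, rfl⟩ := Nat.exists_eq_add_of_le' (Fintype.card_pos.trans_le hj)
    have : IsEmpty (Set.powersetCard ι (j + 2)) := by
      rw [← Finite.card_eq_zero_iff, Set.powersetCard.card, Nat.card_eq_fintype_card,
        Nat.choose_eq_zero_of_lt (by omega)]
    exact (Koszul.torPairIdealEquiv ι k j).injective.subsingleton

/-- Let `I_{2,n} ⊆ P = K[y_1,…,y_n]` be the ideal generated by all
squarefree monomials of degree 2.  Then for `0 ≤ h ≤ n-2`,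
`dim_K Tor_{h+1}^P(P/I_{2,n}, P/𝔪) = (h+1)·C(n,h+2)`, and `Tor_j^P(P/I_{2,n}, P/𝔪) = 0`
for all `j ≥ n`: the total Betti numbers of `I_{2,n}` coincide with those of the rational
normal curve in `ℙ^n`. -/
theorem betti_numbers_of_squarefree_degree_two_ideal
    (K : Type) [Field K] [Infinite K] (n : ℕ) (hn : 2 ≤ n) :
    (∀ h : ℕ, h ≤ n - 2 →
      kdim K (MvPolynomial (Fin n) K)
          (torModule K n
            (Ideal.span {g : MvPolynomial (Fin n) K | ∃ i j : Fin n, i < j ∧ g = X i * X j})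
            (h + 1)) =
        ((h + 1) * Nat.choose n (h + 2) : ℕ)) ∧
    (∀ j : ℕ, n ≤ j →
      Subsingleton
        (torModule K n
          (Ideal.span {g : MvPolynomial (Fin n) K | ∃ i j : Fin n, i < j ∧ g = X i * X j})
          j)) := by
  have : Nonempty (Fin n) := ⟨⟨0, by omega⟩⟩
  obtain ⟨hrank, hvanish⟩ := betti_numbers_of_squarefree_degree_two_ideal_general K (Fin n)
  exact ⟨fun h _ => (hrank h).some.rank_eq.trans (by simp), fun j hj => hvanish j (by simpa)⟩
end

section
/- Let f_1, …, f_n (n ≥ 2) be a regular sequence of homogeneous polynomials of positive degree in R = K[x_0, x_1, …, x_n], and let I = (f_i f_j : 1 ≤ i < j ≤ n). Then there exists an exact sequence of R-modules 0 → F_{n−2} → F_{n−3} → ⋯ → F_1 → F_0 → I → 0 in which each F_h is a free R-module of rank (h+1)·C(n, h+2); in particular F_0 has rank C(n,2) and F_{n−2} has rank n−1. -/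
open MvPolynomial

/-!
Put `J_S = (f_i f_j : i ≠ j ∈ S)` and `A_S = (f_i : i ∈ S)`. For `a ∉ S` one has
`J_{S ∪ {a}} = f_a A_S + J_S`, and `f_a` is a nonzerodivisor modulo `J_S`, because `J_S` is the
intersection of the ideals `A_{S ∖ {i}}`, `i ∈ S`, and homogeneous regular sequences may be
permuted. Hence `0 → J_S → A_S ⊕ J_S → J_{S ∪ {a}} → 0` is exact, and the mapping cone of a lift of
its first map to free resolutions resolves `J_{S ∪ {a}}`. The Koszul resolution of `A_S`, of ranks
`C(|S|, h + 1)`, comes from the same construction applied to `A_{S ∪ {a}} = f_a R + A_S`.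
-/

universe u

section FiniteFreeResolution

/-- `M` has a free resolution of finite length whose `h`-th term is `R ^ r h`, given as iterated
presentations of kernels. The length is not recorded: the resolution stops at a zero kernel beyond
which `r` vanishes. -/
inductive HasFiniteFreeResolution (R : Type u) [CommRing R] :
    (ℕ → ℕ) → ∀ (M : Type u) [AddCommGroup M] [Module R M], Prop
  | zero {r : ℕ → ℕ} {M : Type u} [AddCommGroup M] [Module R M] (hr : ∀ h, r h = 0)
      (hM : Subsingleton M) : HasFiniteFreeResolution R r M
  | step {r : ℕ → ℕ} {M : Type u} [AddCommGroup M] [Module R M] (φ : (Fin (r 0) → R) →ₗ[R] M)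
      (hφ : Function.Surjective φ)
      (hker : HasFiniteFreeResolution R (fun h => r (h + 1)) (LinearMap.ker φ)) :
      HasFiniteFreeResolution R r M

variable {R : Type u} [CommRing R] {r a b c : ℕ → ℕ} {M N P Q A B C : Type u}
  [AddCommGroup M] [Module R M] [AddCommGroup N] [Module R N]
  [AddCommGroup P] [Module R P] [AddCommGroup Q] [Module R Q]
  [AddCommGroup A] [Module R A] [AddCommGroup B] [Module R B] [AddCommGroup C] [Module R C]

theorem exists_surjective_prod_exact_ker [Module.Projective R Q]
    {i : A →ₗ[R] B} {p : B →ₗ[R] C} (hi : Function.Injective i) (hp : Function.Surjective p)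
    (hip : Function.Exact i p) {φ : P →ₗ[R] A} (hφ : Function.Surjective φ)
    {χ : Q →ₗ[R] C} (hχ : Function.Surjective χ) :
    ∃ (θ : P × Q →ₗ[R] B) (j : LinearMap.ker φ →ₗ[R] LinearMap.ker θ)
      (q : LinearMap.ker θ →ₗ[R] LinearMap.ker χ), Function.Surjective θ ∧
      Function.Injective j ∧ Function.Surjective q ∧ Function.Exact j q := by
  obtain ⟨ψ, hψ⟩ := Module.projective_lifting_property p χ hp
  replace hψ (z : Q) : p (ψ z) = χ z := LinearMap.congr_fun hψ z
  let θ : P × Q →ₗ[R] B := (i ∘ₗ φ).coprod ψ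
  have exists_preimage (b : B) (z : Q) (hz : χ z = p b) : ∃ v, θ (v, z) = b := by
    obtain ⟨u, hu⟩ := (hip (b - ψ z)).1 (by rw [map_sub, hψ, hz, sub_self])
    exact (hφ u).imp fun v hv => by simp [θ, hv, hu]
  have inl_mem_ker (v : P) (hv : v ∈ LinearMap.ker φ) :
      LinearMap.inl R P Q v ∈ LinearMap.ker θ := by
    simp [θ, LinearMap.mem_ker.1 hv]
  have snd_mem_ker (w : P × Q) (hw : w ∈ LinearMap.ker θ) :
      LinearMap.snd R P Q w ∈ LinearMap.ker χ := by
    simpa [θ, hψ, hip.apply_apply_eq_zero] using congrArg p (LinearMap.mem_ker.1 hw)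
  refine ⟨θ, (LinearMap.inl R P Q).restrict inl_mem_ker, (LinearMap.snd R P Q).restrict snd_mem_ker,
    fun b => ?_, fun x y hxy => Subtype.ext (congrArg (fun w => w.1.1) hxy), ?_, ?_⟩
  · obtain ⟨z, hz⟩ := hχ (p b)
    exact (exists_preimage b z hz).imp' (·, z) fun _ => id
  · rintro ⟨z, hz⟩
    obtain ⟨v, hv⟩ := exists_preimage 0 z (by simpa using hz)
    exact ⟨⟨(v, z), hv⟩, rfl⟩
  · rintro ⟨⟨v, z⟩, hvz⟩
    constructor
    · intro hz
      obtain rfl : z = 0 := congrArg Subtype.val hz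
      exact ⟨⟨v, hi (by simpa [θ] using hvz)⟩, rfl⟩
    · rintro ⟨y, hy⟩
      rw [← hy]
      rfl

namespace HasFiniteFreeResolution

theorem exists_exact (hM : HasFiniteFreeResolution R r M) :
    ∃ (δ : (h : ℕ) → (Fin (r (h + 1)) → R) →ₗ[R] (Fin (r h) → R))
      (ε : (Fin (r 0) → R) →ₗ[R] M), Function.Surjective ε ∧
      LinearMap.range (δ 0) = LinearMap.ker ε ∧
      ∀ h : ℕ, LinearMap.range (δ (h + 1)) = LinearMap.ker (δ h) := by
  induction hM with
  | @zero r _ _ _ hr hM =>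
    have (h : ℕ) : IsEmpty (Fin (r h)) := by rw [hr]; infer_instance
    exact ⟨fun _ => 0, 0, fun x => ⟨0, Subsingleton.elim _ _⟩, Subsingleton.elim _ _,
      fun h => Subsingleton.elim _ _⟩
  | step φ hφ _ ih =>
    obtain ⟨δ, ε, hε, hδ, hex⟩ := ih
    refine ⟨fun h => Nat.casesOn h ((LinearMap.ker φ).subtype ∘ₗ ε) δ, φ, hφ, ?_, ?_⟩
    · simp [LinearMap.range_comp, LinearMap.range_eq_top.2 hε]
    · rintro (_ | h)
      · exact hδ.trans (LinearMap.ker_comp_of_ker_eq_bot _ (Submodule.ker_subtype _)).symm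
      · exact hex h

theorem exists_surjective (hM : HasFiniteFreeResolution R r M) :
    ∃ φ : (Fin (r 0) → R) →ₗ[R] M, Function.Surjective φ ∧
      HasFiniteFreeResolution R (fun h => r (h + 1)) (LinearMap.ker φ) := by
  cases hM with
  | zero hr hM =>
    have : IsEmpty (Fin (r 0)) := by rw [hr]; infer_instance
    exact ⟨0, fun x => ⟨0, Subsingleton.elim _ _⟩, .zero (fun h => hr _) inferInstance⟩
  | step φ hφ hker => exact ⟨φ, hφ, hker⟩

theorem of_linearEquiv (hM : HasFiniteFreeResolution R r M) (e : M ≃ₗ[R] N) :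
    HasFiniteFreeResolution R r N := by
  cases hM with
  | zero hr hM => exact .zero hr e.symm.toEquiv.subsingleton
  | step φ hφ hker =>
    refine .step (e.toLinearMap ∘ₗ φ) (e.surjective.comp hφ) ?_
    rwa [LinearMap.ker_comp_of_ker_eq_bot _ e.ker]

theorem of_surjective (e : P ≃ₗ[R] (Fin (r 0) → R)) {φ : P →ₗ[R] M} (hφ : Function.Surjective φ)
    (hker : HasFiniteFreeResolution R (fun h => r (h + 1)) (LinearMap.ker φ)) :
    HasFiniteFreeResolution R r M := by
  refine .step (φ ∘ₗ e.symm.toLinearMap) (hφ.comp e.symm.surjective) (hker.of_linearEquiv ?_)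
  rw [LinearMap.ker_comp]
  exact (e.submoduleMap _).trans (LinearEquiv.ofEq _ _ (Submodule.map_equiv_eq_comap_symm _ _))

theorem of_free (e : M ≃ₗ[R] (Fin (r 0) → R)) (hr : ∀ h, r (h + 1) = 0) :
    HasFiniteFreeResolution R r M :=
  of_surjective e (φ := LinearMap.id) Function.surjective_id
    (.zero hr (Submodule.subsingleton_iff_eq_bot.2 LinearMap.ker_id))

theorem of_shortExact (hA : HasFiniteFreeResolution R a A) (hC : HasFiniteFreeResolution R c C)
    {i : A →ₗ[R] B} {p : B →ₗ[R] C} (hi : Function.Injective i) (hp : Function.Surjective p)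
    (hip : Function.Exact i p) : HasFiniteFreeResolution R (fun h => a h + c h) B := by
  induction hA generalizing c B C with
  | zero ha hA =>
    have hp_inj : Function.Injective p := (injective_iff_map_eq_zero p).2 fun x hx => by
      obtain ⟨u, rfl⟩ := (hip x).1 hx
      rw [Subsingleton.elim u 0, map_zero]
    simpa [ha] using hC.of_linearEquiv (LinearEquiv.ofBijective p ⟨hp_inj, hp⟩).symm
  | @step a A _ _ φ hφ _ ih =>
    obtain ⟨χ, hχ, hkerχ⟩ := hC.exists_surjective
    obtain ⟨θ, j, q, hθ, hj, hq, hjq⟩ := exists_surjective_prod_exact_ker hi hp hip hφ hχ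
    let e : ((Fin (a 0) → R) × (Fin (c 0) → R)) ≃ₗ[R] (Fin (a 0 + c 0) → R) :=
      (LinearEquiv.sumArrowLequivProdArrow _ _ R R).symm ≪≫ₗ
        LinearEquiv.funCongrLeft R R finSumFinEquiv.symm
    exact of_surjective e hθ (ih hkerχ hj hq hjq)

theorem prod (hA : HasFiniteFreeResolution R a A) (hB : HasFiniteFreeResolution R b B) :
    HasFiniteFreeResolution R (fun h => a h + b h) (A × B) :=
  hA.of_shortExact hB LinearMap.inl_injective LinearMap.snd_surjective Function.Exact.inl_snd

/-- Mapping cone: for a presentation `φ` of `B`, the kernel of `p ∘ φ` is an extension of `A` by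
the kernel of `φ`, so the horseshoe lemma resolves it. -/
theorem of_mappingCone (hA : HasFiniteFreeResolution R a A) (hB : HasFiniteFreeResolution R b B)
    {i : A →ₗ[R] B} {p : B →ₗ[R] C} (hi : Function.Injective i) (hp : Function.Surjective p)
    (hip : Function.Exact i p) (hc_zero : c 0 = b 0) (hc_succ : ∀ h, c (h + 1) = b (h + 1) + a h) :
    HasFiniteFreeResolution R c C := by
  obtain ⟨φ, hφ, hker⟩ := hB.exists_surjective
  let e : A ≃ₗ[R] LinearMap.ker p :=
    LinearEquiv.ofInjective i hi ≪≫ₗ LinearEquiv.ofEq _ _ hip.linearMap_ker_eq.symm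
  let q : LinearMap.ker (p ∘ₗ φ) →ₗ[R] LinearMap.ker p := φ.restrict fun _ hx => hx
  have hq : Function.Surjective q := fun y =>
    (hφ y.1).elim fun x hx => ⟨⟨x, by simp [hx]⟩, Subtype.ext hx⟩
  have hle : LinearMap.ker φ ≤ LinearMap.ker (p ∘ₗ φ) := LinearMap.ker_le_ker_comp φ p
  have hexact : Function.Exact (Submodule.inclusion hle) q := fun x =>
    ⟨fun hx => ⟨⟨x.1, congrArg Subtype.val hx⟩, rfl⟩, by
      rintro ⟨y, rfl⟩
      exact Subtype.ext y.2⟩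
  refine of_surjective (LinearEquiv.funCongrLeft R R (finCongr hc_zero)) (φ := p ∘ₗ φ)
    (hp.comp hφ) ?_
  simpa only [hc_succ] using
    hker.of_shortExact (hA.of_linearEquiv e) (Submodule.inclusion_injective hle) hq hexact

/-- Since `x` is a nonzerodivisor modulo `I ≤ J`, the sequence `0 → I → J × I → x J + I → 0` with
maps `y ↦ (y, -x y)` and `(y, z) ↦ x y + z` is exact. -/
theorem span_singleton_mul_sup {I J : Ideal R} (hIJ : I ≤ J) {x : R}
    (hx : IsSMulRegular (R ⧸ I) x)
    (hI : HasFiniteFreeResolution R a I) (hJ : HasFiniteFreeResolution R b J)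
    (hc_zero : c 0 = b 0 + a 0) (hc_succ : ∀ h, c (h + 1) = b (h + 1) + a (h + 1) + a h) :
    HasFiniteFreeResolution R c (Ideal.span {x} * J ⊔ I : Ideal R) := by
  let i : I →ₗ[R] J × I := (Submodule.inclusion hIJ).prod (-(x • LinearMap.id))
  let p : J × I →ₗ[R] (Ideal.span {x} * J ⊔ I : Ideal R) :=
    ((x • J.subtype).coprod I.subtype).codRestrict _ fun z =>
      Submodule.add_mem_sup (Ideal.mul_mem_mul (Ideal.mem_span_singleton_self x) z.1.2) z.2.2
  have hi : Function.Injective i := fun y z hyz =>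
    Subtype.ext (congrArg (fun w : J × I => (w.1 : R)) hyz)
  have hp : Function.Surjective p := by
    rintro ⟨y, hy⟩
    obtain ⟨u, hu, v, hv, rfl⟩ := Submodule.mem_sup.1 hy
    obtain ⟨w, hw, rfl⟩ := Ideal.mem_span_singleton_mul.1 hu
    exact ⟨(⟨w, hw⟩, ⟨v, hv⟩), rfl⟩
  have hip : Function.Exact i p := by
    rintro ⟨y, z⟩
    constructor
    · intro hyz
      have hz : -(x * y) = (z : R) :=
        (eq_neg_of_add_eq_zero_right (congrArg Subtype.val hyz)).symm
      have hy : (y : R) ∈ I := mem_of_isSMulRegular_quotient_of_smul_mem hx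
        (neg_mem_iff.1 (hz ▸ z.2))
      exact ⟨⟨y, hy⟩, Prod.ext rfl (Subtype.ext hz)⟩
    · rintro ⟨y, hy⟩
      rw [← hy]
      exact Subtype.ext (add_neg_cancel (x * (y : R)))
  exact hI.of_mappingCone (hJ.prod hI) hi hp hip hc_zero hc_succ

end HasFiniteFreeResolution

end FiniteFreeResolution

theorem isSMulRegular_quotient_iInf {R : Type*} [CommRing R] {κ : Sort*} {I : κ → Ideal R} {x : R}
    (hx : ∀ k, IsSMulRegular (R ⧸ I k) x) : IsSMulRegular (R ⧸ ⨅ k, I k) x := by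
  rw [isSMulRegular_quotient_iff_mem_of_smul_mem]
  intro y hy
  rw [Submodule.mem_iInf] at hy ⊢
  exact fun k => mem_of_isSMulRegular_quotient_of_smul_mem (hx k) (hy k)

section PairwiseProducts

variable {R : Type u} [CommRing R] {ι : Type*}

/-- The ideal generated by the products `f i * f j` of members of `f` with distinct indices in `S`;
taking ordered pairs spares an order on `ι`. -/
def pairwiseProductIdeal (f : ι → R) (S : Set ι) : Ideal R :=
  Ideal.span ((fun p : ι × ι => f p.1 * f p.2) '' S.offDiag)

theorem mul_mem_pairwiseProductIdeal {f : ι → R} {S : Set ι} {i j : ι} (hi : i ∈ S) (hj : j ∈ S)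
    (hij : i ≠ j) : f i * f j ∈ pairwiseProductIdeal f S :=
  Ideal.subset_span ⟨(i, j), ⟨hi, hj, hij⟩, rfl⟩

theorem pairwiseProductIdeal_le_iff {f : ι → R} {S : Set ι} {J : Ideal R} :
    pairwiseProductIdeal f S ≤ J ↔ ∀ i ∈ S, ∀ j ∈ S, i ≠ j → f i * f j ∈ J := by
  rw [pairwiseProductIdeal, Ideal.span_le, Set.image_subset_iff]
  exact ⟨fun h i hi j hj hij => h (a := (i, j)) ⟨hi, hj, hij⟩,
    fun h p hp => h p.1 hp.1 p.2 hp.2.1 hp.2.2⟩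

@[simp]
theorem pairwiseProductIdeal_empty (f : ι → R) : pairwiseProductIdeal f ∅ = ⊥ := by
  simp [pairwiseProductIdeal]

theorem pairwiseProductIdeal_le_span_image (f : ι → R) (S : Set ι) :
    pairwiseProductIdeal f S ≤ Ideal.span (f '' S) :=
  pairwiseProductIdeal_le_iff.2 fun _ hi _ _ _ =>
    Ideal.mul_mem_right _ _ (Ideal.subset_span (Set.mem_image_of_mem f hi))

open scoped Pointwise in
theorem pairwiseProductIdeal_insert (f : ι → R) {S : Set ι} {a : ι} (ha : a ∉ S) :
    pairwiseProductIdeal f (insert a S) =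
      Ideal.span {f a} * Ideal.span (f '' S) ⊔ pairwiseProductIdeal f S := by
  have hleft : (fun p : ι × ι => f p.1 * f p.2) '' ({a} ×ˢ S) = {f a} * f '' S := by
    simp [Set.singleton_prod, Set.image_image]
  have hright : (fun p : ι × ι => f p.1 * f p.2) '' (S ×ˢ {a}) = {f a} * f '' S := by
    simp [Set.prod_singleton, Set.image_image, mul_comm]
  rw [pairwiseProductIdeal, Set.offDiag_insert ha, Set.image_union, Set.image_union, hleft, hright,
    Set.union_assoc, Set.union_self, Set.union_comm, Ideal.span_union, Ideal.span_mul_span',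
    pairwiseProductIdeal]

theorem mul_mem_pairwiseProductIdeal_of_mem_span_image {f : ι → R} {S : Set ι} {i : ι} (hi : i ∈ S)
    {y : R} (hy : y ∈ Ideal.span (f '' (S \ {i}))) : f i * y ∈ pairwiseProductIdeal f S := by
  have hle : Ideal.span {f i} * Ideal.span (f '' (S \ {i})) ≤ pairwiseProductIdeal f S := by
    rw [← Set.insert_sdiff_self_of_mem hi, pairwiseProductIdeal_insert f (by simp)]
    simp
  exact hle (Ideal.mul_mem_mul (Ideal.mem_span_singleton_self _) hy)

theorem pairwiseProductIdeal_univ [LinearOrder ι] (f : ι → R) :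
    pairwiseProductIdeal f Set.univ = Ideal.span {g | ∃ i j, i < j ∧ g = f i * f j} := by
  apply le_antisymm
  · refine pairwiseProductIdeal_le_iff.2 fun i _ j _ hij => ?_
    obtain h | h := hij.lt_or_gt
    · exact Ideal.subset_span ⟨i, j, h, rfl⟩
    · exact Ideal.subset_span ⟨j, i, h, mul_comm _ _⟩
  · rw [Ideal.span_le]
    rintro _ ⟨i, j, hij, rfl⟩
    exact mul_mem_pairwiseProductIdeal trivial trivial hij.ne

/-- Each `f i` is a nonzerodivisor modulo the ideal generated by any finitely many other `f j`.
For finite `ι` this says that every ordering of `f` is a weakly regular sequence. -/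
def IsPermutablyRegular (f : ι → R) : Prop :=
  ∀ (S : Finset ι) (i : ι), i ∉ S → IsSMulRegular (R ⧸ Ideal.span (f '' S)) (f i)

namespace IsPermutablyRegular

variable {f : ι → R}

theorem coeff_mem_span_image (hf : IsPermutablyRegular f) {S T : Finset ι} {c : ι → R} {i : ι}
    (hiS : i ∉ S) (hiT : i ∈ T) (hTS : ∀ j ∈ T, j ≠ i → j ∈ S)
    (hsum : ∑ j ∈ T, c j • f j ∈ Ideal.span (f '' S)) : c i ∈ Ideal.span (f '' S) := by
  classical
  have hrest : ∑ j ∈ T.erase i, c j • f j ∈ Ideal.span (f '' S) :=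
    Ideal.sum_mem _ fun j hj => Ideal.mul_mem_left _ _ <| Ideal.subset_span <|
      Set.mem_image_of_mem f (hTS j (Finset.mem_of_mem_erase hj) (Finset.ne_of_mem_erase hj))
  have hmul : f i * c i ∈ Ideal.span (f '' S) := by
    rwa [← Finset.add_sum_erase _ _ hiT, Ideal.add_mem_iff_left _ hrest, smul_eq_mul,
      mul_comm] at hsum
  exact mem_of_isSMulRegular_quotient_of_smul_mem (hf S i hiS) hmul

/-- If `y = ∑ c i * f i` over `i ≠ m` lies in all the ideals on the right, then each `c i` lies in
the `i`-th one. -/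
theorem pairwiseProductIdeal_eq_iInf (hf : IsPermutablyRegular f) {S : Finset ι}
    (hS : S.Nonempty) :
    pairwiseProductIdeal f S = ⨅ i : S, Ideal.span (f '' (S \ {i.1})) := by
  classical
  apply le_antisymm
  · refine le_iInf fun i => pairwiseProductIdeal_le_iff.2 fun j hj k hk hjk => ?_
    have mem_span {l : ι} (hl : l ∈ S) (hli : l ≠ i) : f l ∈ Ideal.span (f '' (S \ {i.1})) :=
      Ideal.subset_span (Set.mem_image_of_mem f ⟨hl, hli⟩)
    by_cases hji : j = i
    · exact Ideal.mul_mem_left _ _ (mem_span hk (hji ▸ hjk.symm))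
    · exact Ideal.mul_mem_right _ _ (mem_span hj hji)
  · intro y hy
    have hy_mem (i : ι) (hi : i ∈ S) : y ∈ Ideal.span (f '' (S.erase i : Finset ι)) := by
      rw [Finset.coe_erase]
      exact (Submodule.mem_iInf _).1 hy ⟨i, hi⟩
    obtain ⟨m, hm⟩ := hS
    obtain ⟨c, rfl⟩ := (Submodule.mem_span_image_finset_iff_exists_fun' R).1 (hy_mem m hm)
    refine Ideal.sum_mem _ fun i hi => ?_
    have hiS : i ∈ S := Finset.mem_of_mem_erase hi
    have hci : c i ∈ Ideal.span (f '' (S.erase i : Finset ι)) :=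
      hf.coeff_mem_span_image (Finset.notMem_erase i S) hi
        (fun j hj hji => Finset.mem_erase.2 ⟨hji, Finset.mem_of_mem_erase hj⟩) (hy_mem i hiS)
    rw [smul_eq_mul, mul_comm]
    exact mul_mem_pairwiseProductIdeal_of_mem_span_image hiS (by rwa [← Finset.coe_erase])

theorem isSMulRegular_quotient_pairwiseProductIdeal (hf : IsPermutablyRegular f) {S : Finset ι}
    {a : ι} (ha : a ∉ S) : IsSMulRegular (R ⧸ pairwiseProductIdeal f S) (f a) := by
  classical
  obtain rfl | hS := S.eq_empty_or_nonempty
  · have hbot : pairwiseProductIdeal f ↑(∅ : Finset ι) = Ideal.span (f '' ↑(∅ : Finset ι)) := by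
      simp
    rw [hbot]
    exact hf ∅ a ha
  · rw [hf.pairwiseProductIdeal_eq_iInf hS]
    refine isSMulRegular_quotient_iInf fun i => ?_
    rw [← Finset.coe_erase]
    exact hf _ a fun h => ha (Finset.mem_of_mem_erase h)

theorem hasFiniteFreeResolution_span_image (hf : IsPermutablyRegular f) (S : Finset ι) :
    HasFiniteFreeResolution R (fun h => S.card.choose (h + 1)) (Ideal.span (f '' S)) := by
  classical
  induction S using Finset.induction_on with
  | empty =>
    refine .zero (by simp) ?_
    simpa using (inferInstance : Subsingleton (⊥ : Ideal R))
  | insert a S ha ih =>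
    have htop : HasFiniteFreeResolution R (Nat.choose 0) (⊤ : Ideal R) :=
      .of_free (Submodule.topEquiv ≪≫ₗ (LinearEquiv.funUnique (Fin 1) R R).symm)
        fun h => Nat.choose_zero_succ h
    rw [Finset.card_insert_of_notMem ha, Finset.coe_insert, Set.image_insert_eq, Ideal.span_insert,
      ← Ideal.mul_top (Ideal.span {f a})]
    exact .span_singleton_mul_sup le_top (hf S a ha) ih htop (by simp [add_comm])
      fun h => by rw [Nat.choose_succ_succ]; simp [add_comm]

theorem hasFiniteFreeResolution_pairwiseProductIdeal (hf : IsPermutablyRegular f) (S : Finset ι) :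
    HasFiniteFreeResolution R (fun h => (h + 1) * S.card.choose (h + 2))
      (pairwiseProductIdeal f S) := by
  classical
  induction S using Finset.induction_on with
  | empty =>
    refine .zero (by simp) ?_
    simpa using (inferInstance : Subsingleton (⊥ : Ideal R))
  | insert a S ha ih =>
    rw [Finset.card_insert_of_notMem ha, Finset.coe_insert,
      pairwiseProductIdeal_insert f (by simpa using ha)]
    refine .span_singleton_mul_sup (pairwiseProductIdeal_le_span_image f S)
      (hf.isSMulRegular_quotient_pairwiseProductIdeal ha) ih
      (hf.hasFiniteFreeResolution_span_image S) ?_ fun h => ?_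
    · simp [Nat.choose_succ_succ S.card 1]
    · rw [Nat.choose_succ_succ S.card (h + 2)]
      ring

end IsPermutablyRegular

end PairwiseProducts

theorem eq_bot_of_le_smul_of_isHausdorff {R M : Type*} [CommRing R] [AddCommGroup M] [Module R M]
    {I : Ideal R} [hI : IsHausdorff I M] {N : Submodule R M} (hN : N ≤ I • N) : N = ⊥ := by
  have hpow (k : ℕ) : N ≤ I ^ k • ⊤ := by
    induction k with
    | zero => simp
    | succ k ih =>
      rw [pow_succ', mul_smul]
      exact hN.trans (smul_mono_right I ih)
  rw [eq_bot_iff, ← hI.iInf_pow_smul]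
  exact le_iInf hpow

section Graded

variable {R σ : Type*} [CommRing R] [SetLike σ R] [AddSubgroupClass σ R] (𝒜 : ℕ → σ) [GradedRing 𝒜]

open HomogeneousIdeal

theorem proj_eq_zero_of_mem_irrelevant_pow {k i : ℕ} (hi : i < k) {x : R}
    (hx : x ∈ (irrelevant 𝒜).toIdeal ^ k) : GradedRing.proj 𝒜 i x = 0 := by
  induction k generalizing i x with
  | zero => exact absurd hi (Nat.not_lt_zero i)
  | succ k ih =>
    rw [pow_succ] at hx
    induction hx using Submodule.mul_induction_on' with
    | mem_mul_mem y hy z hz =>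
      rw [GradedRing.proj_apply, DirectSum.decompose_mul,
        DirectSum.coe_mul_apply_eq_sum_antidiagonal]
      refine Finset.sum_eq_zero fun p hp => ?_
      rw [Finset.HasAntidiagonal.mem_antidiagonal] at hp
      obtain hpk | hp0 : p.1 < k ∨ p.2 = 0 := by omega
      · rw [← GradedRing.proj_apply, ih hpk hy, zero_mul]
      · rw [hp0, ← GradedRing.proj_apply 𝒜 0 z, (mem_irrelevant_iff 𝒜 z).1 hz, mul_zero]
    | add y _ z _ hy hz => rw [map_add, hy, hz, add_zero]

theorem isHausdorff_irrelevant_quotient {Q : Ideal R} (hQ : Q.IsHomogeneous 𝒜) :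
    IsHausdorff (irrelevant 𝒜).toIdeal (R ⧸ Q) := by
  refine ⟨fun x hx => ?_⟩
  obtain ⟨y, rfl⟩ := Submodule.Quotient.mk_surjective Q x
  rw [Submodule.Quotient.mk_eq_zero, hQ.mem_iff]
  intro i
  have hmem : Submodule.Quotient.mk y ∈
      ((irrelevant 𝒜).toIdeal ^ (i + 1) • ⊤ : Submodule R (R ⧸ Q)) :=
    SModEq.zero.1 (hx (i + 1))
  rw [← Submodule.range_mkQ, ← Submodule.map_top, ← Submodule.map_smul'', smul_eq_mul,
    Ideal.mul_top] at hmem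
  obtain ⟨z, hz, hzy⟩ := hmem
  have hyz : y - z ∈ Q := (Submodule.Quotient.eq Q).1 hzy.symm
  have hproj : GradedRing.proj 𝒜 i (y - z) = GradedRing.proj 𝒜 i y := by
    rw [map_sub, proj_eq_zero_of_mem_irrelevant_pow 𝒜 i.lt_succ_self hz, sub_zero]
  rw [← GradedRing.proj_apply, ← hproj]
  exact hQ i hyz

theorem isWeaklyRegular_of_perm_of_mem_irrelevant {rs rs' : List R}
    (hrs : RingTheory.Sequence.IsWeaklyRegular R rs) (hperm : rs.Perm rs')
    (hhom : ∀ x ∈ rs, SetLike.IsHomogeneousElem 𝒜 x) (hirr : ∀ x ∈ rs, x ∈ irrelevant 𝒜) :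
    RingTheory.Sequence.IsWeaklyRegular R rs' := by
  refine hrs.prototype_perm hperm fun a b ts hts => ?_
  intro K hK
  have ha : Ideal.span {a} ≤ (irrelevant 𝒜).toIdeal :=
    (Ideal.span_singleton_le_iff_mem _).2 (hirr a (hts.subset (by simp)))
  have hQ : (Ideal.ofList ts • ⊤ : Ideal R).IsHomogeneous 𝒜 := by
    rw [smul_eq_mul, Ideal.mul_top]
    exact Ideal.homogeneous_span 𝒜 _ fun x hx =>
      hhom x (hts.subset (List.mem_cons_of_mem _ (List.mem_cons_of_mem _ hx)))
  have := isHausdorff_irrelevant_quotient 𝒜 hQ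
  refine eq_bot_of_le_smul_of_isHausdorff (I := (irrelevant 𝒜).toIdeal) ?_
  calc K = Ideal.span {a} • K := by rw [Submodule.ideal_span_singleton_smul, ← hK]
    _ ≤ (irrelevant 𝒜).toIdeal • K := Submodule.smul_mono_left ha

theorem isPermutablyRegular_of_mem_irrelevant {n : ℕ} {f : Fin n → R}
    (hhom : ∀ j, SetLike.IsHomogeneousElem 𝒜 (f j)) (hirr : ∀ j, f j ∈ irrelevant 𝒜)
    (hreg : RingTheory.Sequence.IsWeaklyRegular R (List.ofFn f)) : IsPermutablyRegular f := by
  intro S i hi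
  have hnodup : (S.toList ++ [i]).Nodup := by
    rw [← List.concat_eq_append]
    exact S.nodup_toList.concat (by simpa using hi)
  obtain ⟨l₀, hl₀, hsub⟩ := hnodup.subperm fun j _ => List.mem_finRange j
  obtain ⟨l, hl⟩ := hsub.exists_perm_append
  have h := isWeaklyRegular_of_perm_of_mem_irrelevant 𝒜 (List.ofFn_eq_map ▸ hreg)
    ((hl.trans (hl₀.append_right l)).map f) (by simpa using hhom) (by simpa using hirr)
  have hspan : (Ideal.ofList (S.toList.map f) • ⊤ : Ideal R) = Ideal.span (f '' S) := by
    rw [smul_eq_mul, Ideal.mul_top, Ideal.ofList]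
    congr 1
    ext x
    simp
  rw [List.map_append, List.map_append, RingTheory.Sequence.isWeaklyRegular_append_iff,
    RingTheory.Sequence.isWeaklyRegular_append_iff, hspan] at h
  exact (RingTheory.Sequence.isWeaklyRegular_singleton_iff _ _).1 h.1.2

end Graded

theorem free_resolution_of_pairwise_products_of_regular_sequence_general {R : Type u} [CommRing R]
    {σ : Type*} [SetLike σ R] [AddSubgroupClass σ R] (𝒜 : ℕ → σ) [GradedRing 𝒜] {n : ℕ}
    {f : Fin n → R} {d : Fin n → ℕ} (hd : ∀ j, 0 < d j) (hf : ∀ j, f j ∈ 𝒜 (d j))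
    (hreg : RingTheory.Sequence.IsWeaklyRegular R (List.ofFn f)) :
    ∃ (δ : (h : ℕ) → (Fin ((h + 2) * n.choose (h + 3)) → R) →ₗ[R]
          (Fin ((h + 1) * n.choose (h + 2)) → R))
      (ε : (Fin ((0 + 1) * n.choose (0 + 2)) → R) →ₗ[R] R),
      LinearMap.range ε = Ideal.span {g | ∃ i j, i < j ∧ g = f i * f j} ∧
      LinearMap.range (δ 0) = LinearMap.ker ε ∧
      ∀ h, LinearMap.range (δ (h + 1)) = LinearMap.ker (δ h) := by
  have hperm : IsPermutablyRegular f := isPermutablyRegular_of_mem_irrelevant 𝒜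
    (fun j => ⟨d j, hf j⟩) (fun j => HomogeneousIdeal.mem_irrelevant_of_mem 𝒜 (hd j) (hf j)) hreg
  have hres := hperm.hasFiniteFreeResolution_pairwiseProductIdeal Finset.univ
  rw [Finset.card_univ, Fintype.card_fin, Finset.coe_univ, pairwiseProductIdeal_univ] at hres
  obtain ⟨δ, ε, hε, hδ, hexact⟩ := hres.exists_exact
  refine ⟨δ, (Submodule.subtype _) ∘ₗ ε, ?_, ?_, hexact⟩
  · rw [LinearMap.range_comp_of_range_eq_top _ (LinearMap.range_eq_top.2 hε),
      Submodule.range_subtype]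
  · rw [LinearMap.ker_comp_of_ker_eq_bot _ (Submodule.ker_subtype _), hδ]

/-- Let `f_1,…,f_n` (`n ≥ 2`) be a regular sequence of homogeneous
polynomials of positive degree in `R = K[x_0,…,x_n]` and `I = (f_i f_j : i < j)`.  Then
there is an exact sequence `0 → F_{n-2} → ⋯ → F_1 → F_0 → I → 0` with each `F_h` free of
rank `(h+1)·C(n,h+2)` (for `h > n-2` these ranks vanish, so the sequence is finite); in
particular `F_0` has rank `C(n,2)` and `F_{n-2}` has rank `n-1`. -/
theorem free_resolution_of_pairwise_products_of_regular_sequence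
    (K : Type) [Field K] [Infinite K] (n : ℕ) (hn : 2 ≤ n)
    (f : Fin n → MvPolynomial (Fin (n + 1)) K) (d : Fin n → ℕ) (hd : ∀ j, 0 < d j)
    (hhom : ∀ j, (f j).IsHomogeneous (d j))
    (hreg : RingTheory.Sequence.IsRegular (MvPolynomial (Fin (n + 1)) K) (List.ofFn f)) :
    ∃ (δ : (h : ℕ) →
        ((Fin ((h + 2) * Nat.choose n (h + 3)) → MvPolynomial (Fin (n + 1)) K) →ₗ[MvPolynomial (Fin (n + 1)) K]
          (Fin ((h + 1) * Nat.choose n (h + 2)) → MvPolynomial (Fin (n + 1)) K)))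
      (ε : (Fin ((0 + 1) * Nat.choose n (0 + 2)) → MvPolynomial (Fin (n + 1)) K)
        →ₗ[MvPolynomial (Fin (n + 1)) K] MvPolynomial (Fin (n + 1)) K),
      LinearMap.range ε =
        (Ideal.span {g : MvPolynomial (Fin (n + 1)) K | ∃ i j : Fin n, i < j ∧ g = f i * f j} :
          Ideal (MvPolynomial (Fin (n + 1)) K)) ∧
      LinearMap.range (δ 0) = LinearMap.ker ε ∧
      ∀ h : ℕ, LinearMap.range (δ (h + 1)) = LinearMap.ker (δ h) :=
  have := gradedAlgebra (σ := Fin (n + 1)) (R := K)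
  free_resolution_of_pairwise_products_of_regular_sequence_general
    (homogeneousSubmodule (Fin (n + 1)) K) hd hhom hreg.toIsWeaklyRegular
end
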